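/- arXiv:2201.13119 — 11 statements merged into one kernel-verified Lean document; each statement's English description precedes it below -/
import Mathlib

section
/- Let G = (V,E) be an undirected graph with edge weights w : E → ℤ⁺ and let D(v) = Σ_{e incident to v} w(e). Let H be the graph with vertex set {x_{v,e,i} : v ∈ V, e ∈ E an edge incident to v, 1 ≤ i ≤ w(e)}, in which two distinct vertices x_{v,e,i} and x_{u,e',j} are adjacent if and only if v = u or e = e'. Then G has a circulating orientation if and only if V(H) admits a bipartition (Z₁, Z₂) such that the number of edges of H with one endpoint in Z₁ and the other endpoint in Z₂ is at least Σ_{e∈E} w(e)² + Σ_{v∈V} D(v)²/4. -/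
/-!
For a bipartition of `V(H)` with sides `true` and `false`, let `t(v,u)` be the number of vertices
`x_{v,e,i}` with `e = {v,u}` on side `true`, and put `T(v) = ∑_u t(v,u)`. The clique of `H` at `v`
contributes `T(v) (D(v) - T(v))` cut edges, and the bipartite part belonging to `e = {v,u}`
contributes `t(v,u) (w(e) - t(u,v)) + t(u,v) (w(e) - t(v,u))`. Hence the target value minus the
number of cut edges equals
`∑_v (D(v)/2 - T(v))² + ∑_e ((w(e) - t(v,u)) (w(e) - t(u,v)) + t(v,u) t(u,v))`
(`cut_deficit`). Both sums consist of nonnegative terms, so the target is reached exactly when all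
of them vanish: for every edge one of `t(v,u)`, `t(u,v)` is `w(e)` and the other is `0`, which is an
orientation, and `T(v) = D(v)/2` for every `v`, which says that the orientation is circulating.
-/

section

variable {V : Type*} [Fintype V] [DecidableEq V] (G : SimpleGraph V) [DecidableRel G.Adj]
  (w : Sym2 V → ℕ)

/-- Vertices of the graph `H`: triples `x_{v,e,i}` where `e` is an edge of `G` incident
to `v` (encoded by its other endpoint) and `1 ≤ i ≤ w(e)`. -/
abbrev MaxCutVert : Type _ :=
  {q : V × V × ℕ // G.Adj q.1 q.2.1 ∧ 1 ≤ q.2.2 ∧ q.2.2 ≤ w s(q.1, q.2.1)}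

/-- The graph `H`: two distinct vertices `x_{v,e,i}` and `x_{u,e',j}` are adjacent if
and only if `v = u` or `e = e'`. -/
def maxCutGraph : SimpleGraph (MaxCutVert G w) :=
  SimpleGraph.fromRel (fun x y =>
    x.val.1 = y.val.1 ∨ s(x.val.1, x.val.2.1) = s(y.val.1, y.val.2.1))

/-- The weighted degree `D(v)` of a vertex of `G`. -/
def wDeg (v : V) : ℕ := ∑ u ∈ G.neighborFinset v, w s(v, u)

/-! ### Counting the vertices of `H` on each side -/

instance maxCutVert_finite : Finite (MaxCutVert G w) := by
  have : (Set.univ ×ˢ (Set.univ ×ˢ Set.Iic (∑ e, w e)) : Set (V × V × ℕ)).Finite :=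
    Set.finite_univ.prod (Set.finite_univ.prod (Set.finite_Iic _))
  refine (this.subset ?_ : Set.Finite {q : V × V × ℕ |
    G.Adj q.1 q.2.1 ∧ 1 ≤ q.2.2 ∧ q.2.2 ≤ w s(q.1, q.2.1)})
  rintro ⟨v, u, i⟩ ⟨-, -, h⟩
  simp only [Set.mem_prod, Set.mem_univ, true_and, Set.mem_Iic]
  exact h.trans (Finset.single_le_sum (f := w) (fun _ _ => Nat.zero_le _) (Finset.mem_univ s(v, u)))

noncomputable instance maxCutVertFintype : Fintype (MaxCutVert G w) := Fintype.ofFinite _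

/-- The weight of the edge `{p.1, p.2}`, set to `0` when `p` is not a pair of adjacent vertices. -/
def pairWeight (p : V × V) : ℕ := if G.Adj p.1 p.2 then w s(p.1, p.2) else 0

/-- The number of vertices `x_{v,e,i}` of `H` with `v = p.1` and `e = {p.1, p.2}` that lie on
side `c` of the bipartition `b`. -/
noncomputable def sideCount (b : MaxCutVert G w → Bool) (c : Bool) (p : V × V) : ℕ :=
  (Finset.univ.filter fun x : MaxCutVert G w => (x.val.1, x.val.2.1) = p ∧ b x = c).card

lemma card_pair_fiber (p : V × V) :
    (Finset.univ.filter fun x : MaxCutVert G w => (x.val.1, x.val.2.1) = p).card =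
      pairWeight G w p := by
  obtain ⟨v, u⟩ := p
  unfold pairWeight
  split_ifs with h
  · have hc : (Finset.Icc 1 (w s(v, u))).card = w s(v, u) := by simp
    refine Eq.trans ?_ hc
    refine Finset.card_bij (fun x _ => x.val.2.2) ?_ ?_ ?_
    · rintro ⟨⟨v', u', i⟩, hx⟩ hm
      simp only [Finset.mem_filter, Finset.mem_univ, true_and, Prod.mk.injEq] at hm
      obtain ⟨rfl, rfl⟩ := hm
      exact Finset.mem_Icc.2 hx.2
    · rintro ⟨⟨v', u', i⟩, hx⟩ hm ⟨⟨v'', u'', j⟩, hy⟩ hm' hij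
      simp only [Finset.mem_filter, Finset.mem_univ, true_and, Prod.mk.injEq] at hm hm' hij
      simp [hm.1, hm.2, hm'.1, hm'.2, hij]
    · intro i hi
      exact ⟨⟨(v, u, i), h, Finset.mem_Icc.1 hi⟩, by simp, rfl⟩
  · rw [Finset.card_eq_zero, Finset.filter_eq_empty_iff]
    rintro ⟨⟨v', u', i⟩, hx⟩ - hm
    simp only [Prod.mk.injEq] at hm
    obtain ⟨rfl, rfl⟩ := hm
    exact h hx.1

lemma sideCount_add (b : MaxCutVert G w → Bool) (p : V × V) :
    sideCount G w b true p + sideCount G w b false p = pairWeight G w p := by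
  rw [← card_pair_fiber, sideCount, sideCount, ← Finset.card_union_of_disjoint]
  · congr 1
    ext x
    cases h : b x <;> simp [h]
  · rw [Finset.disjoint_filter]
    rintro x - ⟨-, h⟩ ⟨-, h'⟩
    simp [h] at h'

lemma pairWeight_swap (v u : V) : pairWeight G w (u, v) = pairWeight G w (v, u) := by
  simp only [pairWeight, G.adj_comm u v, Sym2.eq_swap (a := u)]

lemma sum_pairWeight (v : V) : ∑ u, pairWeight G w (v, u) = wDeg G w v := by
  simp only [wDeg, pairWeight, ← Finset.sum_filter]
  exact Finset.sum_congr (by ext; simp) fun _ _ => rfl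

/-! ### Counting cut edges -/

/-- Cut edges counted by the pairs `(v, e)`, `(v', e')` to which their two ends belong. -/
lemma ncard_cut_eq_sum (b : MaxCutVert G w → Bool) :
    {p : MaxCutVert G w × MaxCutVert G w |
      (maxCutGraph G w).Adj p.1 p.2 ∧ b p.1 = true ∧ b p.2 = false}.ncard =
    ∑ p : V × V, ∑ q : V × V, if p.1 = q.1 ∨ q = p.swap then
      sideCount G w b true p * sideCount G w b false q else 0 := by
  classical
  rw [Set.ncard_eq_toFinset_card',
    Finset.card_eq_sum_card_fiberwise
      (f := fun z : MaxCutVert G w × MaxCutVert G w =>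
        ((z.1.val.1, z.1.val.2.1), (z.2.val.1, z.2.val.2.1)))
      (t := Finset.univ) (fun _ _ => by simp), Fintype.sum_prod_type]
  refine Finset.sum_congr rfl fun p _ => Finset.sum_congr rfl fun q _ => ?_
  have hadj : ∀ x y : MaxCutVert G w, (x.val.1, x.val.2.1) = p → (y.val.1, y.val.2.1) = q →
      b x = true → b y = false →
      ((maxCutGraph G w).Adj x y ↔ (p.1 = q.1 ∨ q = p.swap)) := by
    rintro x y rfl rfl hx hy
    have hne : x ≠ y := by rintro rfl; simp [hx] at hy
    simp only [maxCutGraph, SimpleGraph.fromRel_adj, Sym2.eq_iff, Prod.ext_iff, Prod.fst_swap,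
      Prod.snd_swap]
    grind
  split_ifs with h
  · rw [sideCount, sideCount, ← Finset.card_product]
    congr 1
    ext ⟨x, y⟩
    simp only [Finset.mem_filter, Set.mem_toFinset, Set.mem_ofPred_eq, Finset.mem_product,
      Finset.mem_univ, true_and, Prod.mk.injEq]
    have := hadj x y
    grind
  · rw [Finset.card_eq_zero, Finset.filter_eq_empty_iff]
    rintro ⟨x, y⟩ hm heq
    simp only [Set.mem_toFinset, Set.mem_ofPred_eq] at hm
    have h1 := congrArg Prod.fst heq
    have h2 := congrArg Prod.snd heq
    exact h ((hadj x y h1 h2 hm.2.1 hm.2.2).1 hm.1)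

/-- The cut edges split into those inside the clique at some `v` and those joining the two
copies of some edge. -/
lemma ncard_cut_eq (b : MaxCutVert G w → Bool) :
    {p : MaxCutVert G w × MaxCutVert G w |
      (maxCutGraph G w).Adj p.1 p.2 ∧ b p.1 = true ∧ b p.2 = false}.ncard =
    ∑ v, (∑ u, sideCount G w b true (v, u)) * (∑ u, sideCount G w b false (v, u)) +
      ∑ v, ∑ u, sideCount G w b true (v, u) * sideCount G w b false (u, v) := by
  rw [ncard_cut_eq_sum, Fintype.sum_prod_type, ← Finset.sum_add_distrib]
  refine Finset.sum_congr rfl fun v _ => ?_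
  rw [Finset.sum_mul, ← Finset.sum_add_distrib]
  refine Finset.sum_congr rfl fun u _ => ?_
  have hsplit : ∀ q : V × V, (if (v, u).1 = q.1 ∨ q = (v, u).swap then
      sideCount G w b true (v, u) * sideCount G w b false q else 0) =
      (if v = q.1 then sideCount G w b true (v, u) * sideCount G w b false q else 0) +
      (if q = (u, v) then sideCount G w b true (v, u) * sideCount G w b false q else 0) := by
    intro q
    -- The two adjacency conditions overlap only for a loop `v = u`, where the counts vanish.
    by_cases hvu : v = u
    · have h0 : sideCount G w b true (v, u) = 0 := by
        have := sideCount_add G w b (v, u)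
        simp [pairWeight, hvu] at this
        rw [hvu]; exact this.1
      simp [h0]
    · by_cases h1 : v = q.1
      · have : q ≠ (u, v) := by rintro rfl; exact hvu h1
        rw [if_pos (Or.inl h1), if_pos h1, if_neg this, add_zero]
      · simp [h1]
  rw [Finset.sum_congr rfl fun q _ => hsplit q, Finset.sum_add_distrib, Finset.mul_sum]
  congr 1
  · rw [Fintype.sum_prod_type, Finset.sum_eq_single v]
    · simp
    · intro v' _ hv'
      simp [hv'.symm]
    · simp
  · simp

/-! ### The deficit as a sum of nonnegative terms -/

/-- Each edge is counted once for each of its two orderings. -/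
lemma two_mul_sum_sq : 2 * ∑ e ∈ G.edgeFinset, ((w e : ℚ)) ^ 2 =
    ∑ v, ∑ u, ((pairWeight G w (v, u) : ℚ)) ^ 2 := by
  have h1 : ∑ d : G.Dart, (w d.edge : ℚ) ^ 2 = 2 * ∑ e ∈ G.edgeFinset, ((w e : ℚ)) ^ 2 := by
    rw [← Finset.sum_fiberwise_of_maps_to (s := Finset.univ) (t := G.edgeFinset)
      (g := SimpleGraph.Dart.edge) (fun d _ => by simp [SimpleGraph.Dart.edge_mem]),
      Finset.mul_sum]
    refine Finset.sum_congr rfl fun e he => ?_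
    rw [Finset.sum_congr rfl (g := fun _ => (w e : ℚ) ^ 2)
      (fun d hd => by rw [(Finset.mem_filter.1 hd).2]), Finset.sum_const,
      G.dart_edge_fiber_card e (SimpleGraph.mem_edgeFinset.1 he), nsmul_eq_mul]
    norm_num
  rw [← h1, ← Fintype.sum_prod_type' (f := fun v u => ((pairWeight G w (v, u) : ℚ)) ^ 2)]
  have h2 : ∑ p : V × V, ((pairWeight G w (p.1, p.2) : ℚ)) ^ 2 =
      ∑ p ∈ Finset.univ.filter (fun p : V × V => G.Adj p.1 p.2), (w s(p.1, p.2) : ℚ) ^ 2 := by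
    rw [Finset.sum_filter]
    refine Finset.sum_congr rfl fun p _ => ?_
    unfold pairWeight
    split_ifs <;> simp
  rw [h2]
  refine Finset.sum_bij' (fun d _ => d.toProd)
    (fun p hp => ⟨p, (Finset.mem_filter.1 hp).2⟩) ?_ ?_ ?_ ?_ ?_
  · intro d _; simp [d.adj]
  · simp
  · simp
  · simp
  · intro d _; rfl

/-- The target value minus the number of cut edges, written as a sum of nonnegative terms. -/
lemma cut_deficit (b : MaxCutVert G w → Bool) :
    ((∑ e ∈ G.edgeFinset, ((w e : ℚ)) ^ 2) + ∑ v : V, ((wDeg G w v : ℚ)) ^ 2 / 4) -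
      ({p : MaxCutVert G w × MaxCutVert G w |
        (maxCutGraph G w).Adj p.1 p.2 ∧ b p.1 = true ∧ b p.2 = false}.ncard : ℚ) =
    ∑ v, ((wDeg G w v : ℚ) / 2 - ∑ u, (sideCount G w b true (v, u) : ℚ)) ^ 2 +
    (∑ v, ∑ u, ((sideCount G w b false (v, u) : ℚ) * sideCount G w b false (u, v) +
      sideCount G w b true (v, u) * sideCount G w b true (u, v))) / 2 := by
  have hadd : ∀ v u, (pairWeight G w (v, u) : ℚ) =
      sideCount G w b true (v, u) + sideCount G w b false (v, u) := fun v u => by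
    rw [← sideCount_add G w b]; push_cast; rfl
  have hE := two_mul_sum_sq G w
  have hV : ∑ v : V, ((wDeg G w v : ℚ)) ^ 2 / 4 -
      ∑ v, (∑ u, (sideCount G w b true (v, u) : ℚ)) * (∑ u, (sideCount G w b false (v, u) : ℚ)) =
      ∑ v, ((wDeg G w v : ℚ) / 2 - ∑ u, (sideCount G w b true (v, u) : ℚ)) ^ 2 := by
    rw [← Finset.sum_sub_distrib]
    refine Finset.sum_congr rfl fun v _ => ?_
    have hD : (wDeg G w v : ℚ) = ∑ u, (sideCount G w b true (v, u) : ℚ) +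
        ∑ u, (sideCount G w b false (v, u) : ℚ) := by
      rw [← sum_pairWeight, ← Finset.sum_add_distrib]
      push_cast
      exact Finset.sum_congr rfl fun u _ => hadd v u
    rw [hD]; ring
  -- Symmetrize the sum over ordered pairs of adjacent vertices.
  have hs : ∑ v, ∑ u, (sideCount G w b true (v, u) : ℚ) * sideCount G w b false (u, v) =
      ∑ v, ∑ u, (sideCount G w b true (u, v) : ℚ) * sideCount G w b false (v, u) :=
    Finset.sum_comm
  have hP : ∑ v, ∑ u, ((pairWeight G w (v, u) : ℚ)) ^ 2 -
      ∑ v, ∑ u, (sideCount G w b true (v, u) : ℚ) * sideCount G w b false (u, v) -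
      ∑ v, ∑ u, (sideCount G w b true (u, v) : ℚ) * sideCount G w b false (v, u) =
      ∑ v, ∑ u, ((sideCount G w b false (v, u) : ℚ) * sideCount G w b false (u, v) +
      sideCount G w b true (v, u) * sideCount G w b true (u, v)) := by
    simp only [← Finset.sum_sub_distrib]
    refine Finset.sum_congr rfl fun v _ => Finset.sum_congr rfl fun u _ => ?_
    have h1 := hadd v u
    have h2 := hadd u v
    rw [pairWeight_swap] at h2
    have h3 : ((pairWeight G w (v, u) : ℚ)) ^ 2 =
        (sideCount G w b true (v, u) + sideCount G w b false (v, u)) *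
        (sideCount G w b true (u, v) + sideCount G w b false (u, v)) := by
      rw [← h1, ← h2]; ring
    rw [h3]; ring
  rw [ncard_cut_eq]
  push_cast
  linarith

/-- The bipartition reaches the target exactly when all terms of `cut_deficit` vanish. -/
lemma large_cut_iff (b : MaxCutVert G w → Bool) :
    ((∑ e ∈ G.edgeFinset, ((w e : ℚ)) ^ 2) + ∑ v : V, ((wDeg G w v : ℚ)) ^ 2 / 4) ≤
      ({p : MaxCutVert G w × MaxCutVert G w |
        (maxCutGraph G w).Adj p.1 p.2 ∧ b p.1 = true ∧ b p.2 = false}.ncard : ℚ) ↔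
    (∀ v, wDeg G w v = 2 * ∑ u, sideCount G w b true (v, u)) ∧
    (∀ v u, sideCount G w b false (v, u) * sideCount G w b false (u, v) = 0 ∧
      sideCount G w b true (v, u) * sideCount G w b true (u, v) = 0) := by
  rw [← sub_nonpos, cut_deficit]
  have hA : 0 ≤ ∑ v, ((wDeg G w v : ℚ) / 2 - ∑ u, (sideCount G w b true (v, u) : ℚ)) ^ 2 :=
    Finset.sum_nonneg fun _ _ => sq_nonneg _
  have hB : 0 ≤ ∑ v, ∑ u, ((sideCount G w b false (v, u) : ℚ) * sideCount G w b false (u, v) +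
      sideCount G w b true (v, u) * sideCount G w b true (u, v)) :=
    Finset.sum_nonneg fun _ _ => Finset.sum_nonneg fun _ _ => by positivity
  constructor
  · intro h
    have hA0 := (Finset.sum_eq_zero_iff_of_nonneg (fun _ _ => sq_nonneg _)).1
      (le_antisymm (by linarith) hA)
    have hB0 := (Finset.sum_eq_zero_iff_of_nonneg
      (fun _ _ => Finset.sum_nonneg fun _ _ => by positivity)).1 (le_antisymm (by linarith) hB)
    refine ⟨fun v => ?_, fun v u => ?_⟩
    · have h1 := pow_eq_zero_iff (two_ne_zero) |>.1 (hA0 v (Finset.mem_univ v))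
      have h2 : (wDeg G w v : ℚ) = 2 * ∑ u, (sideCount G w b true (v, u) : ℚ) := by linarith
      exact_mod_cast h2
    · have h1 := (Finset.sum_eq_zero_iff_of_nonneg (fun _ _ => by positivity)).1
        (hB0 v (Finset.mem_univ v)) u (Finset.mem_univ u)
      have h2 : sideCount G w b false (v, u) * sideCount G w b false (u, v) +
        sideCount G w b true (v, u) * sideCount G w b true (u, v) = 0 := by exact_mod_cast h1
      omega
  · rintro ⟨h1, h2⟩
    have hA0 : ∑ v, ((wDeg G w v : ℚ) / 2 - ∑ u, (sideCount G w b true (v, u) : ℚ)) ^ 2 = 0 := by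
      refine Finset.sum_eq_zero fun v _ => ?_
      rw [h1 v]; push_cast; ring
    have hB0 : ∑ v, ∑ u, ((sideCount G w b false (v, u) : ℚ) * sideCount G w b false (u, v) +
        sideCount G w b true (v, u) * sideCount G w b true (u, v)) = 0 := by
      refine Finset.sum_eq_zero fun v _ => Finset.sum_eq_zero fun u _ => ?_
      have := h2 v u
      have h3 : sideCount G w b false (v, u) * sideCount G w b false (u, v) +
        sideCount G w b true (v, u) * sideCount G w b true (u, v) = 0 := by omega
      exact_mod_cast h3
    rw [hA0, hB0]; norm_num

/-- The flow out of `v` equals the flow into `v` exactly when it is half of the total `D(v)`. -/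
lemma circulating_iff (σ : V → V → Bool) (v : V) :
    ∑ u ∈ G.neighborFinset v, (if σ v u then w s(v, u) else 0) =
        ∑ u ∈ G.neighborFinset v, (if σ v u then 0 else w s(v, u)) ↔
      wDeg G w v = 2 * ∑ u, if σ v u then pairWeight G w (v, u) else 0 := by
  have h1 : ∑ u ∈ G.neighborFinset v, (if σ v u then w s(v, u) else 0) =
      ∑ u, if σ v u then pairWeight G w (v, u) else 0 := by
    rw [SimpleGraph.neighborFinset_eq_filter, Finset.sum_filter]
    refine Finset.sum_congr rfl fun u _ => ?_
    unfold pairWeight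
    split_ifs <;> rfl
  have h2 : wDeg G w v = ∑ u ∈ G.neighborFinset v, (if σ v u then w s(v, u) else 0) +
      ∑ u ∈ G.neighborFinset v, (if σ v u then 0 else w s(v, u)) := by
    rw [wDeg, ← Finset.sum_add_distrib]
    refine Finset.sum_congr rfl fun u _ => ?_
    split_ifs <;> simp
  omega

/-- `G` has a circulating orientation if and only if `H` has a bipartition cutting at
least `Σ_{e∈E} w(e)² + Σ_{v∈V} D(v)²/4` edges. An orientation is encoded by
`σ : V → V → Bool` (`σ v u = true` meaning the edge `{v,u}` is directed out of `v`),
and a bipartition by `b : V(H) → Bool`; the number of cut edges is counted as the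
number of ordered pairs of adjacent vertices with `b`-values `true`, `false`. -/
theorem circulating_orientation_iff_large_cut
    (hw : ∀ e ∈ G.edgeSet, 0 < w e) :
    (∃ σ : V → V → Bool,
      (∀ u v, G.Adj u v → σ u v = ! σ v u) ∧
      (∀ v : V,
        ∑ u ∈ G.neighborFinset v, (if σ v u then w s(v, u) else 0) =
        ∑ u ∈ G.neighborFinset v, (if σ v u then 0 else w s(v, u)))) ↔
    (∃ b : MaxCutVert G w → Bool,
      ((∑ e ∈ G.edgeFinset, ((w e : ℚ))^2) + ∑ v : V, ((wDeg G w v : ℚ))^2 / 4) ≤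
        ({p : MaxCutVert G w × MaxCutVert G w |
            (maxCutGraph G w).Adj p.1 p.2 ∧ b p.1 = true ∧ b p.2 = false}.ncard : ℚ)) := by
  simp only [large_cut_iff, circulating_iff]
  constructor
  · rintro ⟨σ, hσ, hc⟩
    -- Put all `x_{v,e,i}` on side `true` when `e` is directed out of `v`.
    have ht : ∀ c v u, sideCount G w (fun x => σ x.val.1 x.val.2.1) c (v, u) =
        if σ v u = c then pairWeight G w (v, u) else 0 := by
      intro c v u
      rw [← card_pair_fiber, sideCount]
      split_ifs with h
      · congr 1
        ext x
        simp only [Finset.mem_filter, Finset.mem_univ, true_and, Prod.mk.injEq]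
        grind
      · rw [Finset.card_eq_zero, Finset.filter_eq_empty_iff]
        rintro x -
        simp only [Prod.mk.injEq]
        grind
    refine ⟨fun x => σ x.val.1 x.val.2.1, fun v => ?_, fun v u => ?_⟩
    · simp only [ht]
      exact hc v
    · simp only [ht]
      by_cases hvu : G.Adj v u
      · have := hσ v u hvu
        cases h : σ u v <;> simp [this, h]
      · simp [pairWeight, hvu]
  · rintro ⟨b, hD, hZ⟩
    -- Direct `e` out of `v` when all `x_{v,e,i}` lie on side `true`.
    have ht : ∀ v u, sideCount G w b true (v, u) =
        if (decide (sideCount G w b false (v, u) = 0)) then pairWeight G w (v, u) else 0 := by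
      intro v u
      have h1 := sideCount_add G w b (v, u)
      have h2 := sideCount_add G w b (u, v)
      rw [pairWeight_swap] at h2
      have h3 := hZ v u
      simp only [mul_eq_zero] at h3
      simp only [decide_eq_true_eq]
      split_ifs <;> omega
    refine ⟨fun v u => decide (sideCount G w b false (v, u) = 0), fun v u hvu => ?_, fun v => ?_⟩
    · have h1 := sideCount_add G w b (v, u)
      have h2 := sideCount_add G w b (u, v)
      rw [pairWeight_swap] at h2
      have h3 := hZ v u
      simp only [mul_eq_zero] at h3
      have hpos : 0 < pairWeight G w (v, u) := by
        simp only [pairWeight, hvu, if_true]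
        exact hw _ hvu
      rw [Bool.eq_not, ne_eq, decide_eq_decide]
      omega
    · rw [hD v]
      congr 1
      exact Finset.sum_congr rfl fun u _ => ht v u

end
end

section
/- For every positive integer α: (a) H_α admits a proper coloring with 2α colors that uses exactly α distinct colors on X and exactly 2α distinct colors on Y; (b) H_α admits a proper coloring with 2α colors that uses exactly 2α distinct colors on X and exactly α distinct colors on Y; and (c) in every proper coloring of H_α with at most 2α colors, either exactly α distinct colors appear on X and exactly 2α distinct colors appear on Y, or exactly 2α distinct colors appear on X and exactly α distinct colors appear on Y. -/
/-!
In a proper `2α`-coloring the clique `Z*` uses every color once, so each color is the color of a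
unique `z_j`, and a vertex `v` outside `Z*` must take the color of some `z_j` with `j ∈ f(v)`
(`color_eq_clique`). Thus `s^U_k` has the color of `z_k`, and the odd path vertex
`p^U_{2k-1}` has either the color of `z_k` (it is *low*) or that of `z_{α+k}` (it is *high*).

The even path vertex `p^U_{2k}`, whose list is `{k, α+k+1}`, forces lowness to propagate: if
`p^U_{2k-1}` is low, then `p^U_{2k}` has the color of `z_{α+k+1}`, hence `p^U_{2k+1}` is low
(`low_step`). So if `p^U_1` is low, all odd vertices of `P^U` are low, and then those of the other
path are all high, since `p^X_i` and `p^Y_i` are adjacent for odd `i`. As `p^X_1` and `p^Y_1` have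
the same two-element list and are adjacent, exactly one of them is low. The side that is low
shows the `α` colors of `z_1, …, z_α`; the side that is high shows all `2α` colors. Conversely,
`gadgetColor` realizes both possibilities.
-/

section Gadget

variable (α : ℕ)

/-- Vertices of the gadget `H_α`: the clique `Z* = {z₁,…,z_{2α}}` (left summand), the
path vertices `p^U_1,…,p^U_{2α−1}` for `U ∈ {X (true), Y (false)}` (middle summand,
0-indexed), and the independent set vertices `s^U_1,…,s^U_α` (right summand,
0-indexed). -/
abbrev HVert : Type := Fin (2 * α) ⊕ ((Fin (2 * α - 1) × Bool) ⊕ (Fin α × Bool))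

/-- The list `f(p^U_i)` of a path vertex (with `i` the 0-based index, so the 1-based
index is `i + 1`): for odd 1-based index `{⌈i₁/2⌉, α + ⌈i₁/2⌉}` and for even 1-based
index `{i₁/2, α + i₁/2 + 1}`. -/
def pathList (i : Fin (2 * α - 1)) : Set ℕ :=
  if ((i : ℕ) + 1) % 2 = 1 then {((i : ℕ) + 2) / 2, α + ((i : ℕ) + 2) / 2}
  else {((i : ℕ) + 1) / 2, α + ((i : ℕ) + 1) / 2 + 1}

/-- The relation generating the edges of `H_α`: `Z*` is a clique; consecutive path
vertices of `P^X` and of `P^Y` are adjacent; `p^X_i` and `p^Y_i` are adjacent for odd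
1-based `i`; and a vertex `v ∉ Z*` is adjacent to `z_j` if and only if `j ∉ f(v)`
(where `f(s^U_i) = {i}` with `i` the 1-based index). -/
def HRel : HVert α → HVert α → Prop
  | Sum.inl _, Sum.inl _ => True
  | Sum.inr (Sum.inl (i, u)), Sum.inr (Sum.inl (j, u')) =>
      (u = u' ∧ (j : ℕ) = (i : ℕ) + 1) ∨ (u ≠ u' ∧ i = j ∧ ((i : ℕ) + 1) % 2 = 1)
  | Sum.inr (Sum.inl (i, _)), Sum.inl t => ((t : ℕ) + 1) ∉ pathList α i
  | Sum.inr (Sum.inr (i, _)), Sum.inl t => (t : ℕ) ≠ (i : ℕ)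
  | _, _ => False

/-- The gadget graph `H_α`. -/
def HGadget : SimpleGraph (HVert α) := SimpleGraph.fromRel (HRel α)

/-- The set `X = S^X ∪ {p^X_i : i odd}` (1-based odd indices). -/
def Xset : Set (HVert α) :=
  {x | (∃ i : Fin α, x = Sum.inr (Sum.inr (i, true))) ∨
       (∃ i : Fin (2 * α - 1), ((i : ℕ) + 1) % 2 = 1 ∧ x = Sum.inr (Sum.inl (i, true)))}

/-- The set `Y = S^Y ∪ {p^Y_i : i odd}`. -/
def Yset : Set (HVert α) :=
  {x | (∃ i : Fin α, x = Sum.inr (Sum.inr (i, false))) ∨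
       (∃ i : Fin (2 * α - 1), ((i : ℕ) + 1) % 2 = 1 ∧ x = Sum.inr (Sum.inl (i, false)))}

/-- The set `X` (for `u = true`) or `Y` (for `u = false`). -/
def sideSet (n : ℕ) (u : Bool) : Set (HVert n) :=
  {x | (∃ i : Fin n, x = Sum.inr (Sum.inr (i, u))) ∨
       (∃ i : Fin (2 * n - 1), ((i : ℕ) + 1) % 2 = 1 ∧ x = Sum.inr (Sum.inl (i, u)))}

/-- The path vertex with 1-based index `2k + 1`, for `k` counted from `0`. -/
def oddVert {n : ℕ} (u : Bool) (k : Fin n) : HVert n :=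
  Sum.inr (Sum.inl (⟨2 * k, by omega⟩, u))

/-- The 0-based index of the clique vertex of the smaller element of `f(p^U_{2k+1})`. -/
def lo {n : ℕ} (k : Fin n) : Fin (2 * n) := ⟨k, by omega⟩

/-- The 0-based index of the clique vertex of the larger element of `f(p^U_{2k+1})`. -/
def hi {n : ℕ} (k : Fin n) : Fin (2 * n) := ⟨n + k, by omega⟩

/-- A proper coloring of `H_n` by `2n` colors. -/
def IsProper {n : ℕ} (c : HVert n → Fin (2 * n)) : Prop :=
  ∀ u v, (HGadget n).Adj u v → c u ≠ c v

theorem mem_pathList {n : ℕ} (i : Fin (2 * n - 1)) (t : ℕ) :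
    t + 1 ∈ pathList n i ↔
      ((i : ℕ) % 2 = 0 ∧ (t = i / 2 ∨ t = n + i / 2)) ∨
      ((i : ℕ) % 2 = 1 ∧ (t = i / 2 ∨ t = n + i / 2 + 1)) := by
  unfold pathList
  split_ifs with h <;> simp only [Set.mem_insert_iff, Set.mem_singleton_iff] <;> omega

theorem IsProper.ne {n : ℕ} {c : HVert n → Fin (2 * n)} (hc : IsProper c) {u v : HVert n}
    (huv : u ≠ v) (h : HRel n u v) : c u ≠ c v :=
  hc u v ((SimpleGraph.fromRel_adj _ _ _).2 ⟨huv, Or.inl h⟩)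

theorem IsProper.clique_injective {n : ℕ} {c : HVert n → Fin (2 * n)} (hc : IsProper c) :
    Function.Injective fun t : Fin (2 * n) => c (Sum.inl t) := by
  intro s t hst
  by_contra hne
  exact hc.ne (u := Sum.inl s) (v := Sum.inl t) (by simpa using hne) trivial hst

/-- With only `2n` colors the clique shows all of them, so every vertex repeats the color of
some clique vertex. -/
theorem IsProper.color_eq_clique {n : ℕ} {c : HVert n → Fin (2 * n)} (hc : IsProper c)
    (v : HVert n) : ∃ t, c v = c (Sum.inl t) := by
  obtain ⟨t, ht⟩ := Finite.surjective_of_injective hc.clique_injective (c v)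
  exact ⟨t, ht.symm⟩

theorem IsProper.color_indep {n : ℕ} {c : HVert n → Fin (2 * n)} (hc : IsProper c)
    (u : Bool) (k : Fin n) : c (Sum.inr (Sum.inr (k, u))) = c (Sum.inl (lo k)) := by
  obtain ⟨t, ht⟩ := hc.color_eq_clique (Sum.inr (Sum.inr (k, u)))
  have : (t : ℕ) = k := by
    by_contra hne
    exact hc.ne (u := Sum.inr (Sum.inr (k, u))) (v := Sum.inl t) (by simp) hne ht
  rw [ht, show t = lo k from Fin.ext this]

theorem IsProper.color_path {n : ℕ} {c : HVert n → Fin (2 * n)} (hc : IsProper c)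
    (u : Bool) (i : Fin (2 * n - 1)) :
    ∃ t : Fin (2 * n), (t : ℕ) + 1 ∈ pathList n i ∧
      c (Sum.inr (Sum.inl (i, u))) = c (Sum.inl t) := by
  obtain ⟨t, ht⟩ := hc.color_eq_clique (Sum.inr (Sum.inl (i, u)))
  refine ⟨t, ?_, ht⟩
  by_contra hne
  exact hc.ne (u := Sum.inr (Sum.inl (i, u))) (v := Sum.inl t) (by simp) hne ht

theorem IsProper.color_oddVert {n : ℕ} {c : HVert n → Fin (2 * n)} (hc : IsProper c)
    (u : Bool) (k : Fin n) :
    c (oddVert u k) = c (Sum.inl (lo k)) ∨ c (oddVert u k) = c (Sum.inl (hi k)) := by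
  obtain ⟨t, ht, h⟩ := hc.color_path u ⟨2 * k, by omega⟩
  rw [mem_pathList] at ht
  simp only at ht
  have : t = lo k ∨ t = hi k := by
    simp only [lo, hi, Fin.ext_iff]
    omega
  rcases this with rfl | rfl
  · exact Or.inl h
  · exact Or.inr h

theorem IsProper.oddVert_ne {n : ℕ} {c : HVert n → Fin (2 * n)} (hc : IsProper c)
    {u u' : Bool} (hu : u ≠ u') (k : Fin n) : c (oddVert u k) ≠ c (oddVert u' k) :=
  hc.ne (by simpa [oddVert] using hu)
    (Or.inr ⟨hu, rfl, by simp only; omega⟩)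

/-- Lowness passes from one odd path vertex to the next one: the even vertex between them has
to use the larger element of its list, which is also the larger element of the next list. -/
theorem IsProper.low_step {n : ℕ} {c : HVert n → Fin (2 * n)} (hc : IsProper c)
    (u : Bool) (k : ℕ) (hk : k + 1 < n)
    (h : c (oddVert u ⟨k, by omega⟩) = c (Sum.inl (lo ⟨k, by omega⟩))) :
    c (oddVert u ⟨k + 1, hk⟩) = c (Sum.inl (lo ⟨k + 1, hk⟩)) := by
  obtain ⟨t, ht, hq⟩ := hc.color_path u ⟨2 * k + 1, by omega⟩
  rw [mem_pathList] at ht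
  simp only at ht
  have h1 : c (oddVert u ⟨k, by omega⟩) ≠ c (Sum.inr (Sum.inl (⟨2 * k + 1, by omega⟩, u))) :=
    hc.ne (by simp [oddVert]) (Or.inl ⟨rfl, rfl⟩)
  have h2 : c (Sum.inr (Sum.inl (⟨2 * k + 1, by omega⟩, u))) ≠ c (oddVert u ⟨k + 1, hk⟩) :=
    hc.ne (by simp [oddVert]; omega) (Or.inl ⟨rfl, by simp only; omega⟩)
  have ht' : t = hi ⟨k + 1, hk⟩ := by
    have : t ≠ lo ⟨k, by omega⟩ := by
      intro e
      rw [e] at hq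
      exact h1 (h.trans hq.symm)
    simp only [lo, hi, Fin.ext_iff, ne_eq] at this ⊢
    omega
  subst ht'
  exact (hc.color_oddVert u ⟨k + 1, hk⟩).resolve_right fun e => h2 (hq.trans e.symm)

theorem IsProper.low_all {n : ℕ} {c : HVert n → Fin (2 * n)} (hc : IsProper c)
    (hn : 1 ≤ n) (u : Bool)
    (h : c (oddVert u ⟨0, hn⟩) = c (Sum.inl (lo ⟨0, hn⟩))) (k : Fin n) :
    c (oddVert u k) = c (Sum.inl (lo k)) := by
  obtain ⟨k, hk⟩ := k
  induction k with
  | zero => exact h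
  | succ k ih => exact hc.low_step u k hk (ih (by omega))

theorem IsProper.high_of_low {n : ℕ} {c : HVert n → Fin (2 * n)} (hc : IsProper c)
    {u u' : Bool} (hu : u ≠ u') (k : Fin n) (h : c (oddVert u k) = c (Sum.inl (lo k))) :
    c (oddVert u' k) = c (Sum.inl (hi k)) :=
  (hc.color_oddVert u' k).resolve_left fun e => hc.oddVert_ne hu k (h.trans e.symm)

theorem mem_sideSet {n : ℕ} (u : Bool) (x : HVert n) :
    x ∈ sideSet n u ↔
      (∃ k : Fin n, x = Sum.inr (Sum.inr (k, u))) ∨ ∃ k : Fin n, x = oddVert u k := by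
  refine or_congr Iff.rfl ⟨?_, ?_⟩
  · rintro ⟨i, hi, rfl⟩
    refine ⟨⟨i / 2, by omega⟩, ?_⟩
    simp only [oddVert, Sum.inr.injEq, Sum.inl.injEq, Prod.mk.injEq, and_true, Fin.ext_iff]
    omega
  · rintro ⟨k, rfl⟩
    exact ⟨⟨2 * k, by omega⟩, by simp only; omega, rfl⟩

theorem IsProper.ncard_low {n : ℕ} {c : HVert n → Fin (2 * n)} (hc : IsProper c) (u : Bool)
    (h : ∀ k, c (oddVert u k) = c (Sum.inl (lo k))) : (c '' sideSet n u).ncard = n := by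
  have himg : c '' sideSet n u = Set.range fun k : Fin n => c (Sum.inl (lo k)) := by
    ext y
    constructor
    · rintro ⟨x, hx, rfl⟩
      rcases (mem_sideSet u x).1 hx with ⟨k, rfl⟩ | ⟨k, rfl⟩
      · exact ⟨k, (hc.color_indep u k).symm⟩
      · exact ⟨k, (h k).symm⟩
    · rintro ⟨k, rfl⟩
      exact ⟨_, (mem_sideSet u _).2 (Or.inl ⟨k, rfl⟩), hc.color_indep u k⟩
  have hinj : Function.Injective fun k : Fin n => c (Sum.inl (lo k)) := by
    intro k l hkl
    have := hc.clique_injective hkl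
    simpa [lo, Fin.ext_iff] using this
  rw [himg, ← Set.image_univ, Set.ncard_image_of_injective _ hinj, Set.ncard_univ, Nat.card_fin]

theorem IsProper.ncard_high {n : ℕ} {c : HVert n → Fin (2 * n)} (hc : IsProper c) (u : Bool)
    (h : ∀ k, c (oddVert u k) = c (Sum.inl (hi k))) : (c '' sideSet n u).ncard = 2 * n := by
  have himg : c '' sideSet n u = Set.univ := by
    refine Set.eq_univ_of_forall fun y => ?_
    obtain ⟨t, rfl⟩ := Finite.surjective_of_injective hc.clique_injective y
    by_cases ht : (t : ℕ) < n
    · exact ⟨_, (mem_sideSet u _).2 (Or.inl ⟨⟨t, ht⟩, rfl⟩), hc.color_indep u _⟩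
    · have hth : hi ⟨t - n, by omega⟩ = t := by
        simp only [hi, Fin.ext_iff]
        omega
      refine ⟨_, (mem_sideSet u _).2 (Or.inr ⟨⟨t - n, by omega⟩, rfl⟩), ?_⟩
      rw [h, hth]
  rw [himg, Set.ncard_univ, Nat.card_fin]

/-- The coloring giving `z_j` the color `j` in which the path of side `b` is low and the other
path is high. Colors and indices are counted from `0`; on the low path the vertices of odd
(0-based) index take the larger element of their list, on the high path the smaller one. -/
def gadgetColor {n : ℕ} (b : Bool) : HVert n → Fin (2 * n)
  | Sum.inl t => t
  | Sum.inr (Sum.inr (k, _)) => lo k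
  | Sum.inr (Sum.inl (i, u)) =>
      if u = b then
        if h : (i : ℕ) % 2 = 0 then ⟨i / 2, by omega⟩ else ⟨n + i / 2 + 1, by omega⟩
      else
        if (i : ℕ) % 2 = 0 then ⟨n + i / 2, by omega⟩ else ⟨i / 2, by omega⟩

theorem gadgetColor_ne_of_rel {n : ℕ} (b : Bool) (x y : HVert n) (hxy : x ≠ y)
    (h : HRel n x y) : gadgetColor b x ≠ gadgetColor b y := by
  rcases x with s | ⟨i, u⟩ | ⟨k, u⟩ <;> rcases y with t | ⟨j, v⟩ | ⟨l, v⟩ <;>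
    simp only [HRel, mem_pathList] at h
  · simpa [gadgetColor] using hxy
  · simp only [gadgetColor, ne_eq]
    split_ifs <;> simp only [Fin.ext_iff] <;> omega
  · simp only [gadgetColor, ne_eq]
    rcases h with ⟨rfl, h⟩ | ⟨huv, rfl, h⟩
    · split_ifs <;> simp only [Fin.ext_iff] <;> omega
    · cases u <;> cases v <;> cases b <;> simp [Fin.ext_iff] at huv ⊢ <;> split_ifs <;>
        simp <;> omega
  · simp only [gadgetColor, lo, ne_eq, Fin.ext_iff]
    omega

theorem gadgetColor_isProper {n : ℕ} (b : Bool) : IsProper (gadgetColor (n := n) b) := by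
  intro x y h
  obtain ⟨hne, h | h⟩ := (SimpleGraph.fromRel_adj _ _ _).1 h
  · exact gadgetColor_ne_of_rel b x y hne h
  · exact (gadgetColor_ne_of_rel b y x hne.symm h).symm

theorem gadgetColor_low {n : ℕ} (b : Bool) (k : Fin n) :
    gadgetColor b (oddVert b k) = gadgetColor b (Sum.inl (lo k)) := by
  simp [gadgetColor, oddVert, lo]

/-- (a) `H_α` has a proper `2α`-coloring using exactly `α` colors on `X` and exactly
`2α` colors on `Y`; (b) it has a proper `2α`-coloring using exactly `2α` colors on `X`
and exactly `α` colors on `Y`; and (c) every proper coloring of `H_α` with at most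
`2α` colors is of one of these two kinds. -/
theorem HGadget_coloring (hα : 1 ≤ α) :
    (∃ c : HVert α → Fin (2 * α),
      (∀ u v, (HGadget α).Adj u v → c u ≠ c v) ∧
      (c '' Xset α).ncard = α ∧ (c '' Yset α).ncard = 2 * α) ∧
    (∃ c : HVert α → Fin (2 * α),
      (∀ u v, (HGadget α).Adj u v → c u ≠ c v) ∧
      (c '' Xset α).ncard = 2 * α ∧ (c '' Yset α).ncard = α) ∧
    (∀ c : HVert α → Fin (2 * α),
      (∀ u v, (HGadget α).Adj u v → c u ≠ c v) →
      ((c '' Xset α).ncard = α ∧ (c '' Yset α).ncard = 2 * α) ∨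
      ((c '' Xset α).ncard = 2 * α ∧ (c '' Yset α).ncard = α)) := by
  have hX : Xset α = sideSet α true := rfl
  have hY : Yset α = sideSet α false := rfl
  -- A coloring whose side `u` is low at the start of its path has the two counts `α` and `2α`.
  have key : ∀ (c : HVert α → Fin (2 * α)), IsProper c → ∀ u u' : Bool, u ≠ u' →
      c (oddVert u ⟨0, hα⟩) = c (Sum.inl (lo ⟨0, hα⟩)) →
      (c '' sideSet α u).ncard = α ∧ (c '' sideSet α u').ncard = 2 * α := by
    intro c hc u u' hu h
    have hlow := hc.low_all hα u h
    exact ⟨hc.ncard_low u hlow, hc.ncard_high u' fun k => hc.high_of_low hu k (hlow k)⟩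
  rw [hX, hY]
  refine ⟨⟨gadgetColor true, gadgetColor_isProper true, ?_⟩,
    ⟨gadgetColor false, gadgetColor_isProper false, ?_⟩, fun c hc => ?_⟩
  · exact key _ (gadgetColor_isProper true) true false (by decide) (gadgetColor_low true _)
  · exact (key _ (gadgetColor_isProper false) false true (by decide)
      (gadgetColor_low false _)).symm
  · replace hc : IsProper c := hc
    rcases hc.color_oddVert true ⟨0, hα⟩ with h | h
    · exact Or.inl (key c hc true false (by decide) h)
    · have h' : c (oddVert false ⟨0, hα⟩) = c (Sum.inl (lo ⟨0, hα⟩)) :=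
        (hc.color_oddVert false _).resolve_right fun e =>
          hc.oddVert_ne (u := true) (u' := false) (by decide) _ (h.trans e.symm)
      exact Or.inr (key c hc false true (by decide) h').symm

end Gadget
end

section
/- Let G = (V,E) be a graph, let A ⊆ V, and let w ∈ ℕ be such that every induced matching in G[A, V∖A] has size at most w. Then for every S ⊆ A there exists R ⊆ A with |R| ≤ w and N(R) ∖ A = N(S) ∖ A. -/
/-!
Among all subsets of `S` with the same neighbourhood outside `A` as `S`, take an
inclusion-minimal one, `R`. Removing any `x ∈ R` loses a neighbour, so `x` has a private
neighbour `f x ∉ A`, adjacent to `x` and to no other vertex of `R`. The pairs `(x, f x)`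
form an induced matching of size `|R|`, whence `|R| ≤ w`.
-/

/-- `M` is an induced matching in the bipartite graph `G[A,B]`: every pair of `M` is an
edge of `G` from `A` to `B`, the endpoints of distinct pairs are distinct, and there are
no further edges of `G` between endpoints of distinct pairs of `M`. -/
def IsInducedMatchingAcross {V : Type*} (G : SimpleGraph V) (A B : Set V)
    (M : Finset (V × V)) : Prop :=
  (∀ p ∈ M, p.1 ∈ A ∧ p.2 ∈ B ∧ G.Adj p.1 p.2) ∧
  (∀ p ∈ M, ∀ q ∈ M, p ≠ q →
    p.1 ≠ q.1 ∧ p.2 ≠ q.2 ∧ ¬ G.Adj p.1 q.2 ∧ ¬ G.Adj q.1 p.2)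

/-- If every induced matching in `G[A, V∖A]` has size at most `w`, then every `S ⊆ A`
has a representative set `R ⊆ A` with `|R| ≤ w` and `N(R) ∖ A = N(S) ∖ A`. -/
theorem neighborhood_representative {V : Type*} [Fintype V]
    (G : SimpleGraph V) (A : Set V) (w : ℕ)
    (hmim : ∀ M : Finset (V × V), IsInducedMatchingAcross G A Aᶜ M → M.card ≤ w)
    (S : Set V) (hS : S ⊆ A) :
    ∃ R : Set V, R ⊆ A ∧ R.ncard ≤ w ∧
      {v | v ∉ A ∧ ∃ x ∈ R, G.Adj x v} = {v | v ∉ A ∧ ∃ x ∈ S, G.Adj x v} := by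
  classical
  obtain ⟨R, hR⟩ := (Set.toFinite {R : Set V | R ⊆ S ∧
    {v | v ∉ A ∧ ∃ x ∈ R, G.Adj x v} = {v | v ∉ A ∧ ∃ x ∈ S, G.Adj x v}}).exists_minimal
      ⟨S, subset_rfl, rfl⟩
  obtain ⟨hRS, hN⟩ := hR.prop
  refine ⟨R, hRS.trans hS, ?_, hN⟩
  have hpriv : ∀ x ∈ R, ∃ v, v ∉ A ∧ G.Adj x v ∧ ∀ y ∈ R, G.Adj y v → y = x := by
    intro x hx
    by_contra! hcon
    -- Every neighbour of `x` outside `A` is then adjacent to another vertex of `R`, so `R \ {x}`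
    -- has the same neighbourhood outside `A` as `R`.
    have hmem : R ⊆ R \ {x} := by
      refine hR.le_of_le ⟨Set.sdiff_subset.trans hRS, ?_⟩ Set.sdiff_subset
      rw [← hN]
      ext v
      constructor
      · rintro ⟨hv, y, hy, hyv⟩
        exact ⟨hv, y, hy.1, hyv⟩
      · rintro ⟨hv, y, hy, hyv⟩
        by_cases hyx : y = x
        · subst hyx
          obtain ⟨z, hz, hzv, hzy⟩ := hcon v hv hyv
          exact ⟨hv, z, ⟨hz, hzy⟩, hzv⟩
        · exact ⟨hv, y, ⟨hy, hyx⟩, hyv⟩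
    exact (hmem hx).2 rfl
  choose! f hfA hfadj hfpriv using hpriv
  have hM := hmim (R.toFinset.image fun x => (x, f x)) ?_
  · rwa [Finset.card_image_of_injective _ fun x y h => congrArg Prod.fst h,
      ← Set.ncard_eq_toFinset_card'] at hM
  · simp only [IsInducedMatchingAcross, Finset.forall_mem_image, Set.mem_toFinset]
    refine ⟨fun x hx => ⟨hS (hRS hx), hfA x hx, hfadj x hx⟩, fun x hx y hy hne => ?_⟩
    have hxy : x ≠ y := fun h => hne (by rw [h])
    exact ⟨hxy, fun h => hxy (hfpriv y hy x hx (h ▸ hfadj x hx)),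
      fun h => hxy (hfpriv y hy x hx h), fun h => hxy (hfpriv x hx y hy h).symm⟩
end

section
/- Let G be a graph and let A, B ⊆ V(G) be disjoint. Let G' be the graph obtained from G by applying the splitcomp between A and B, and let R denote the set of subdivision vertices created in the construction. Then cutmim_{G'}(A, R) ≤ 2 and cutmim_{G'}(B, R) ≤ 2. -/
/-- The subdivision vertices created by the splitcomp between `A` and `B`:
one for each edge of `G` with one endpoint in `A` and the other in `B`. -/
abbrev SplitcompR {V : Type*} (G : SimpleGraph V) (A B : Set V) : Type _ :=
  {p : V × V // p.1 ∈ A ∧ p.2 ∈ B ∧ G.Adj p.1 p.2}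

/-- The graph obtained from `G` by the splitcomp between `A` and `B`:
each `A`-`B` edge is subdivided, and then the bipartite complement between `A` and the
subdivision vertices, and between `B` and the subdivision vertices, is taken. -/
def splitcompGraph {V : Type*} (G : SimpleGraph V) (A B : Set V) :
    SimpleGraph (V ⊕ SplitcompR G A B) :=
  SimpleGraph.fromRel (fun x y =>
    match x, y with
    | Sum.inl u, Sum.inl v =>
        G.Adj u v ∧ ¬ ((u ∈ A ∧ v ∈ B) ∨ (u ∈ B ∧ v ∈ A))
    | Sum.inl u, Sum.inr ρ =>
        (u ∈ A ∧ u ≠ ρ.val.1) ∨ (u ∈ B ∧ u ≠ ρ.val.2)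
    | Sum.inr _, _ => False)

/-- If every vertex of `B` has at most one non-neighbour in `A`, then induced matchings
in `G[A,B]` have at most two edges. -/
theorem IsInducedMatchingAcross.card_le_two {V : Type*} {G : SimpleGraph V} {A B : Set V}
    {M : Finset (V × V)} (hM : IsInducedMatchingAcross G A B M)
    (h : ∀ x ∈ A, ∀ x' ∈ A, ∀ y ∈ B, ¬ G.Adj x y → ¬ G.Adj x' y → x = x') :
    M.card ≤ 2 := by
  by_contra! hc
  obtain ⟨p, q, r, hp, hq, hr, hpq, hpr, hqr⟩ := Finset.two_lt_card_iff.mp hc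
  exact (hM.2 q hq r hr hqr).1 (h _ (hM.1 q hq).1 _ (hM.1 r hr).1 _ (hM.1 p hp).2.1
    (hM.2 p hp q hq hpq).2.2.2 (hM.2 p hp r hr hpr).2.2.2)

theorem splitcompGraph_adj_inl_inr {V : Type*} {G : SimpleGraph V} {A B : Set V}
    {u : V} {ρ : SplitcompR G A B} :
    (splitcompGraph G A B).Adj (Sum.inl u) (Sum.inr ρ) ↔
      (u ∈ A ∧ u ≠ ρ.val.1) ∨ (u ∈ B ∧ u ≠ ρ.val.2) := by
  simp [splitcompGraph, SimpleGraph.fromRel_adj]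

/-- After the splitcomp between disjoint sets `A` and `B`, the cut between `A`
(resp. `B`) and the set `R` of subdivision vertices has maximum induced matching
size at most `2`. -/
theorem splitcomp_cutmim_le_two {V : Type*} (G : SimpleGraph V) (A B : Set V)
    (hAB : Disjoint A B) :
    (∀ M : Finset ((V ⊕ SplitcompR G A B) × (V ⊕ SplitcompR G A B)),
      IsInducedMatchingAcross (splitcompGraph G A B)
        (Sum.inl '' A) (Set.range Sum.inr) M → M.card ≤ 2) ∧
    (∀ M : Finset ((V ⊕ SplitcompR G A B) × (V ⊕ SplitcompR G A B)),
      IsInducedMatchingAcross (splitcompGraph G A B)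
        (Sum.inl '' B) (Set.range Sum.inr) M → M.card ≤ 2) := by
  refine ⟨fun M hM => hM.card_le_two ?_, fun M hM => hM.card_le_two ?_⟩
  all_goals
    rintro _ ⟨a, ha, rfl⟩ _ ⟨b, hb, rfl⟩ _ ⟨ρ, rfl⟩ h₁ h₂
    rw [splitcompGraph_adj_inl_inr] at h₁ h₂
    grind
end

section
/- Let G be a graph, let 𝒫 = (P₁,…,P_r) be a partition of V(G), and let G' = G/𝒫 be the quotient graph. For each i ∈ [r] let Λ_i be a linear order of P_i whose mim-width in the induced subgraph G[P_i] is at most c, and suppose that for all distinct i, j ∈ [r], cutmim_G(P_i, P_j) ≤ d. Let Λ = Λ₁, Λ₂, …, Λ_r be the concatenated linear order of V(G), and let Λ' = P₁, …, P_r be the corresponding linear order of V(G/𝒫). Then the mim-width of Λ in G is at most 2d·cutw(Λ') + c. -/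
/-- The set of the first `i` vertices in the linear order `Λ`. -/
def prefixSet {V : Type*} [Fintype V] (Λ : Fin (Fintype.card V) ≃ V) (i : ℕ) : Set V :=
  {v | ((Λ.symm v : Fin (Fintype.card V)) : ℕ) < i}

/-- Passing to a sub-matching: the endpoints may be placed in any other pair of sides that
contains them, since the second condition on a matching does not mention the sides. -/
theorem IsInducedMatchingAcross.of_subset {V : Type*} {G : SimpleGraph V} {A B A' B' : Set V}
    {M N : Finset (V × V)} (hM : IsInducedMatchingAcross G A B M) (hNM : N ⊆ M)
    (hN : ∀ p ∈ N, p.1 ∈ A' ∧ p.2 ∈ B') : IsInducedMatchingAcross G A' B' N :=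
  ⟨fun p hp => ⟨(hN p hp).1, (hN p hp).2, (hM.1 p (hNM hp)).2.2⟩,
    fun p hp q hq => hM.2 p (hNM hp) q (hNM hq)⟩

/-- A matching all of whose edges cross position `k` of the quotient order has at most `d * W`
edges: at most `W` pairs of parts are joined across `k`, and each pair carries at most `d`
matching edges. -/
theorem card_le_of_crossing {V : Type*} [Fintype V] [DecidableEq V]
    (G : SimpleGraph V) [DecidableRel G.Adj] (r : ℕ) (part : V → Fin r) (d W k : ℕ)
    (hpairs : ∀ t s : Fin r, t ≠ s → ∀ M : Finset (V × V),
      IsInducedMatchingAcross G {v | part v = t} {v | part v = s} M → M.card ≤ d)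
    (hcutw : (Finset.univ.filter (fun p : Fin r × Fin r =>
        (p.1 : ℕ) < k ∧ k ≤ (p.2 : ℕ) ∧
        ∃ u v, part u = p.1 ∧ part v = p.2 ∧ G.Adj u v)).card ≤ W)
    {A B : Set V} {N : Finset (V × V)} (hN : IsInducedMatchingAcross G A B N)
    (hcross : ∀ p ∈ N, (part p.1 : ℕ) < k ∧ k ≤ (part p.2 : ℕ)) :
    N.card ≤ d * W := by
  refine le_trans (Finset.card_le_mul_card_image_of_maps_to
    (f := fun p : V × V => (part p.1, part p.2)) (fun p hp => ?_) d (fun b hb => ?_))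
    (Nat.mul_le_mul_left d hcutw)
  · simp only [Finset.mem_filter, Finset.mem_univ, true_and]
    exact ⟨(hcross p hp).1, (hcross p hp).2, p.1, p.2, rfl, rfl, (hN.1 p hp).2.2⟩
  · simp only [Finset.mem_filter, Finset.mem_univ, true_and] at hb
    refine hpairs b.1 b.2 (fun h => ?_) _
      (hN.of_subset (Finset.filter_subset _ _) (fun p hp => ?_))
    · have := congrArg Fin.val h
      omega
    · have h := (Finset.mem_filter.1 hp).2
      exact ⟨congrArg Prod.fst h, congrArg Prod.snd h⟩

/-- Let `𝒫 = (P₁, …, P_r)` (encoded by `part : V → Fin r`) be a partition of `V(G)`.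
Suppose the linear order `Λ` of `V(G)` lists the parts consecutively in the order
`P₁, …, P_r` (hypothesis `hsorted`), each part is internally ordered by a linear order
of mim-width at most `c` in `G[P_i]` (hypothesis `hparts`), every cut `(P_i, P_j)` has
maximum induced matching size at most `d` (hypothesis `hpairs`), and the corresponding
linear order of the quotient graph `G/𝒫` has cutwidth at most `W` (hypothesis `hcutw`).
Then the mim-width of `Λ` in `G` is at most `2·d·W + c`. -/
theorem mimwidth_of_quotient_cutwidth {V : Type*} [Fintype V] [DecidableEq V]
    (G : SimpleGraph V) [DecidableRel G.Adj]
    (r : ℕ) (part : V → Fin r) (c d W : ℕ)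
    (Λ : Fin (Fintype.card V) ≃ V)
    (hsorted : ∀ i j : Fin (Fintype.card V), i ≤ j → part (Λ i) ≤ part (Λ j))
    (hparts : ∀ (t : Fin r) (i : ℕ) (M : Finset (V × V)),
      IsInducedMatchingAcross G ({v | part v = t} ∩ prefixSet Λ i)
        ({v | part v = t} \ prefixSet Λ i) M → M.card ≤ c)
    (hpairs : ∀ t s : Fin r, t ≠ s → ∀ M : Finset (V × V),
      IsInducedMatchingAcross G {v | part v = t} {v | part v = s} M → M.card ≤ d)
    (hcutw : ∀ i : ℕ,
      (Finset.univ.filter (fun p : Fin r × Fin r =>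
        (p.1 : ℕ) < i ∧ i ≤ (p.2 : ℕ) ∧
        ∃ u v, part u = p.1 ∧ part v = p.2 ∧ G.Adj u v)).card ≤ W) :
    ∀ (i : ℕ) (M : Finset (V × V)),
      IsInducedMatchingAcross G (prefixSet Λ i) (prefixSet Λ i)ᶜ M →
        M.card ≤ 2 * d * W + c := by
  intro i M hM
  by_cases hi : i < Fintype.card V
  · -- `t` is the part cut by the prefix: the one containing the first vertex outside it.
    set t := part (Λ ⟨i, hi⟩) with ht
    have hle : ∀ p ∈ M, part p.1 ≤ t ∧ t ≤ part p.2 := by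
      intro p hp
      obtain ⟨h1, h2, -⟩ := hM.1 p hp
      simp only [prefixSet, Set.mem_compl_iff, Set.mem_ofPred_eq, not_lt] at h1 h2
      constructor
      · simpa using hsorted (Λ.symm p.1) ⟨i, hi⟩ (Fin.le_def.2 h1.le)
      · simpa using hsorted ⟨i, hi⟩ (Λ.symm p.2) (Fin.le_def.2 h2)
    let N₀ := M.filter fun p => part p.1 = t ∧ part p.2 = t
    let N₁ := M.filter fun p => part p.1 < t
    let N₂ := M.filter fun p => part p.1 = t ∧ t < part p.2
    have hsub : M ⊆ N₀ ∪ (N₁ ∪ N₂) := by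
      intro p hp
      have h := hle p hp
      simp only [N₀, N₁, N₂, Finset.mem_union, Finset.mem_filter, hp, true_and]
      rcases h.1.lt_or_eq with h1 | h1
      · exact Or.inr (Or.inl h1)
      · rcases h.2.lt_or_eq with h2 | h2
        · exact Or.inr (Or.inr ⟨h1, h2⟩)
        · exact Or.inl ⟨h1, h2.symm⟩
    have h0 : N₀.card ≤ c := by
      refine hparts t i N₀ (hM.of_subset (Finset.filter_subset _ _) fun p hp => ?_)
      obtain ⟨hp, h1, h2⟩ := Finset.mem_filter.1 hp
      exact ⟨⟨h1, (hM.1 p hp).1⟩, h2, (hM.1 p hp).2.1⟩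
    have h1 : N₁.card ≤ d * W := by
      refine card_le_of_crossing G r part d W t hpairs (hcutw t)
        (hM.of_subset (A' := Set.univ) (B' := Set.univ) (Finset.filter_subset _ _)
          fun p hp => ⟨trivial, trivial⟩) fun p hp => ?_
      obtain ⟨hp, h⟩ := Finset.mem_filter.1 hp
      exact ⟨h, (hle p hp).2⟩
    have h2 : N₂.card ≤ d * W := by
      refine card_le_of_crossing G r part d W (t + 1) hpairs (hcutw (t + 1))
        (hM.of_subset (A' := Set.univ) (B' := Set.univ) (Finset.filter_subset _ _)
          fun p hp => ⟨trivial, trivial⟩) fun p hp => ?_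
      obtain ⟨hp, h, h'⟩ := Finset.mem_filter.1 hp
      exact ⟨by rw [h]; exact Nat.lt_succ_self _, h'⟩
    have hcard := Finset.card_le_card hsub
    have hu := Finset.card_union_le N₀ (N₁ ∪ N₂)
    have hu' := Finset.card_union_le N₁ N₂
    rw [mul_assoc]
    omega
  · -- The prefix is all of `V`, so no edge leaves it.
    have : M = ∅ := Finset.eq_empty_of_forall_notMem fun p hp =>
      (hM.1 p hp).2.1 (lt_of_lt_of_le (Λ.symm p.2).isLt (not_lt.1 hi))
    simp [this]
end

section
/- Let (G, V₁,…,V_r, f) with f : V(G) → [k] be an instance of Chained Multicolored Clique, and let G' be its frame graph with associated partition 𝒫 of V(G'). Then G' has an independent set S with |S ∩ P| = 1 for every P ∈ 𝒫 if and only if G has a chained multicolored clique. -/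
/-!
An independent set `S` meeting each part once selects one vertex `w p` from each part `p`. If
`ρ ∈ S` subdivides an edge `ab` between the parts `p` and `q`, then, as `ρ` is adjacent to every
vertex of those parts except `a` and `b`, independence forces `w p = a` and `w q = b`, so
`w p` and `w q` are adjacent in `G`. Conversely, from a chained multicolored clique pick one vertex
`w p` in each part `p`; these vertices together with the subdivision vertices of all the edges
between them form the required independent set.
-/

section Frame

variable {V : Type*} (r k : ℕ) (G : SimpleGraph V) (part : V → Fin r) (col : V → Fin k)

/-- The label of a vertex: the index `(i, j)` of the part `V(i,j)` containing it. -/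
abbrev vLab (v : V) : Fin r × Fin k := (part v, col v)

/-- Lexicographic order on part indices. -/
abbrev LabLt (p q : Fin r × Fin k) : Prop := p.1 < q.1 ∨ (p.1 = q.1 ∧ p.2 < q.2)

/-- The subdivision vertices of the frame graph: one for each edge of `G` whose
endpoints lie in different parts (each such edge represented once, oriented so that
the label of the first endpoint is lexicographically smaller). -/
abbrev SubdivVert : Type _ :=
  {p : V × V // G.Adj p.1 p.2 ∧ LabLt r k (vLab r k part col p.1) (vLab r k part col p.2)}

/-- Vertices of the frame graph: the original vertices together with the subdivision
vertices. -/
abbrev FrameVert : Type _ := V ⊕ SubdivVert r k G part col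

/-- The relation generating the edges of the frame graph: edges of `G` inside a part
are kept; each subdivision vertex of an edge `ab` between two different parts `A ∋ a`,
`B ∋ b` is adjacent (after taking bipartite complements) exactly to `A ∖ {a}` and
`B ∖ {b}`. -/
def frameRel : FrameVert r k G part col → FrameVert r k G part col → Prop
  | Sum.inl u, Sum.inl v =>
      G.Adj u v ∧ vLab r k part col u = vLab r k part col v
  | Sum.inl u, Sum.inr ρ =>
      (vLab r k part col u = vLab r k part col ρ.val.1 ∧ u ≠ ρ.val.1) ∨
      (vLab r k part col u = vLab r k part col ρ.val.2 ∧ u ≠ ρ.val.2)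
  | Sum.inr _, _ => False

/-- The frame graph `G'` of a chained multicolored instance. -/
def frameGraph : SimpleGraph (FrameVert r k G part col) :=
  SimpleGraph.fromRel (frameRel r k G part col)

/-- `G` has a chained multicolored clique: a set `W` of vertices that induces a clique
on every two consecutive layers and contains a vertex of every part `V(i,j)`. -/
def HasChainedMulticoloredClique : Prop :=
  ∃ W : Set V,
    (∀ u ∈ W, ∀ v ∈ W, u ≠ v →
      (part u : ℕ) ≤ (part v : ℕ) + 1 → (part v : ℕ) ≤ (part u : ℕ) + 1 → G.Adj u v) ∧
    (∀ (i : Fin r) (j : Fin k), ∃ v ∈ W, part v = i ∧ col v = j)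

end Frame

/-- The frame graph `G'` of a Chained Multicolored Clique instance has an independent
set containing exactly one vertex of every part of the partition `𝒫` (the parts
`V(i,j)` and the subdivision parts `R(i₁,j₁,i₂,j₂)` for pairs of parts on consecutive
layers) if and only if `G` has a chained multicolored clique. -/
theorem frame_graph_independent_set_iff_chained_clique
    {V : Type*} (r k : ℕ) (G : SimpleGraph V) (part : V → Fin r) (col : V → Fin k)
    (hedge : ∀ u v, G.Adj u v → (part u : ℕ) ≤ (part v : ℕ) + 1) :
    (∃ S : Set (FrameVert r k G part col),
      (∀ x ∈ S, ∀ y ∈ S, ¬ (frameGraph r k G part col).Adj x y) ∧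
      (∀ (i : Fin r) (j : Fin k),
        ∃! x, x ∈ S ∧ ∃ u : V, x = Sum.inl u ∧ part u = i ∧ col u = j) ∧
      (∀ p q : Fin r × Fin k, LabLt r k p q → (q.1 : ℕ) ≤ (p.1 : ℕ) + 1 →
        ∃! x, x ∈ S ∧ ∃ ρ : SubdivVert r k G part col, x = Sum.inr ρ ∧
          vLab r k part col ρ.val.1 = p ∧ vLab r k part col ρ.val.2 = q)) ↔
    HasChainedMulticoloredClique r k G part col := by
  constructor
  -- `W` is the set of original vertices in `S`.
  · rintro ⟨S, hind, hV, hR⟩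
    have key : ∀ u v : V, Sum.inl u ∈ S → Sum.inl v ∈ S →
        LabLt r k (vLab r k part col u) (vLab r k part col v) →
        (part v : ℕ) ≤ (part u : ℕ) + 1 → G.Adj u v := by
      intro u v hu hv hlt hle
      obtain ⟨_, ⟨hρS, ρ, rfl, h1, h2⟩, -⟩ := hR _ _ hlt hle
      have eq1 : u = ρ.val.1 := by
        by_contra hne
        refine hind _ hu _ hρS ?_
        rw [frameGraph, SimpleGraph.fromRel_adj]
        exact ⟨Sum.inl_ne_inr, Or.inl (Or.inl ⟨h1.symm, hne⟩)⟩
      have eq2 : v = ρ.val.2 := by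
        by_contra hne
        refine hind _ hv _ hρS ?_
        rw [frameGraph, SimpleGraph.fromRel_adj]
        exact ⟨Sum.inl_ne_inr, Or.inl (Or.inr ⟨h2.symm, hne⟩)⟩
      rw [eq1, eq2]
      exact ρ.property.1
    refine ⟨{u | Sum.inl u ∈ S}, ?_, ?_⟩
    · intro u hu v hv hne huv hvu
      rcases lt_trichotomy (part u) (part v) with h | h | h
      · exact key u v hu hv (Or.inl h) hvu
      · rcases lt_trichotomy (col u) (col v) with h' | h' | h'
        · exact key u v hu hv (Or.inr ⟨h, h'⟩) hvu
        · exact absurd (Sum.inl_injective ((hV (part v) (col v)).unique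
            ⟨hu, u, rfl, h, h'⟩ ⟨hv, v, rfl, rfl, rfl⟩)) hne
        · exact (key v u hv hu (Or.inr ⟨h.symm, h'⟩) huv).symm
      · exact (key v u hv hu (Or.inl h) huv).symm
    · intro i j
      obtain ⟨_, ⟨hS, u, rfl, h1, h2⟩, -⟩ := hV i j
      exact ⟨u, hS, h1, h2⟩
  · rintro ⟨W, hW, hex⟩
    choose w hwW hwp hwc using hex
    -- `u` is the chosen vertex of its own part.
    let C : V → Prop := fun u => u = w (part u) (col u)
    have hC : ∀ i j, C (w i j) := fun i j => by simp only [C, hwp, hwc]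
    have huniq : ∀ u v, C u → C v → vLab r k part col u = vLab r k part col v → u = v := by
      intro u v hu hv h
      obtain ⟨h1, h2⟩ := Prod.mk.inj h
      rw [hu, hv, h1, h2]
    let S : Set (FrameVert r k G part col) :=
      {x | Sum.elim C (fun ρ => C ρ.val.1 ∧ C ρ.val.2) x}
    have hrel : ∀ x ∈ S, ∀ y ∈ S, ¬ frameRel r k G part col x y := by
      rintro (u | ρ) hx (v | σ) hy h
      · exact h.1.ne (huniq u v hx hy h.2)
      · rcases h with ⟨h, hne⟩ | ⟨h, hne⟩
        · exact hne (huniq _ _ hx hy.1 h)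
        · exact hne (huniq _ _ hx hy.2 h)
      · exact h
      · exact h
    refine ⟨S, ?_, ?_, ?_⟩
    · intro x hx y hy h
      rw [frameGraph, SimpleGraph.fromRel_adj] at h
      exact h.2.elim (hrel x hx y hy) (hrel y hy x hx)
    · intro i j
      refine ⟨Sum.inl (w i j), ⟨hC i j, w i j, rfl, hwp i j, hwc i j⟩, ?_⟩
      rintro _ ⟨hu, u, rfl, rfl, rfl⟩
      exact congrArg Sum.inl hu
    · rintro ⟨i, j⟩ ⟨i', j'⟩ hlt hle
      have hle' : (i : ℕ) ≤ (i' : ℕ) + 1 := by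
        rcases hlt with h | ⟨h, -⟩
        · exact (Fin.lt_def.mp h).le.trans (Nat.le_succ _)
        · exact (congrArg Fin.val h).le.trans (Nat.le_succ _)
      have hl : vLab r k part col (w i j) = (i, j) := Prod.ext (hwp i j) (hwc i j)
      have hl' : vLab r k part col (w i' j') = (i', j') := Prod.ext (hwp i' j') (hwc i' j')
      have hne : w i j ≠ w i' j' := by
        intro h
        have hp : (i, j) = (i', j') := by rw [← hl, ← hl', h]
        obtain ⟨rfl, rfl⟩ := Prod.mk.inj hp
        rcases hlt with h | ⟨-, h⟩
        · exact lt_irrefl _ h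
        · exact lt_irrefl _ h
      have hadj : G.Adj (w i j) (w i' j') :=
        hW _ (hwW i j) _ (hwW i' j') hne (by rwa [hwp, hwp]) (by rwa [hwp, hwp])
      refine ⟨Sum.inr ⟨(w i j, w i' j'), hadj, by rw [hl, hl']; exact hlt⟩,
        ⟨⟨hC i j, hC i' j'⟩, _, rfl, hl, hl'⟩, ?_⟩
      rintro _ ⟨hρ, ρ, rfl, h1, h2⟩
      refine congrArg Sum.inr (Subtype.ext (Prod.ext ?_ ?_))
      · exact huniq _ _ hρ.1 (hC i j) (h1.trans hl.symm)
      · exact huniq _ _ hρ.2 (hC i' j') (h2.trans hl'.symm)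
end

section
/- Let (G, V₁,…,V_r, f) with f : V(G) → [k] be an instance of Chained Multicolored Independent Set, and let G'' be obtained from the frame graph G' of this instance by making every part P ∈ 𝒫 a clique and then adding, for each i ∈ [r] and j ∈ [k], a new vertex z_{i,j} whose neighborhood is exactly V(i,j). Then G'' has a dominating set of size at most rk if and only if G has a chained multicolored independent set. -/
section DS

variable {V : Type*} (r k : ℕ) (G : SimpleGraph V) (part : V → Fin r) (col : V → Fin k)

/-- Two frame-graph vertices lie in the same part of the partition `𝒫`. -/
def SamePart : FrameVert r k G part col → FrameVert r k G part col → Prop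
  | Sum.inl u, Sum.inl v => vLab r k part col u = vLab r k part col v
  | Sum.inr ρ, Sum.inr ρ' =>
      vLab r k part col ρ.val.1 = vLab r k part col ρ'.val.1 ∧
      vLab r k part col ρ.val.2 = vLab r k part col ρ'.val.2
  | _, _ => False

/-- The graph `G''`: the frame graph with every part of `𝒫` turned into a clique,
together with a new vertex `z_{i,j}` for each `(i,j)` whose neighborhood is exactly
`V(i,j)`. -/
def domGraph : SimpleGraph (FrameVert r k G part col ⊕ (Fin r × Fin k)) :=
  SimpleGraph.fromRel (fun x y =>
    match x, y with
    | Sum.inl x, Sum.inl y => frameRel r k G part col x y ∨ SamePart r k G part col x y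
    | Sum.inl (Sum.inl u), Sum.inr (i, j) => part u = i ∧ col u = j
    | _, _ => False)

/-- `G` has a chained multicolored independent set. -/
def HasChainedMulticoloredIndependentSet : Prop :=
  ∃ W : Set V,
    (∀ u ∈ W, ∀ v ∈ W, u ≠ v →
      (part u : ℕ) ≤ (part v : ℕ) + 1 → (part v : ℕ) ≤ (part u : ℕ) + 1 → ¬ G.Adj u v) ∧
    (∀ (i : Fin r) (j : Fin k), ∃ v ∈ W, part v = i ∧ col v = j)

/-- The closed neighbourhood of `z_p` in `G''`: the vertex `z_p` together with the part
`V(p)`. -/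
def zNbhd (p : Fin r × Fin k) (x : FrameVert r k G part col ⊕ (Fin r × Fin k)) : Prop :=
  x = Sum.inr p ∨ ∃ u, x = Sum.inl (Sum.inl u) ∧ vLab r k part col u = p

lemma zNbhd_unique {p q : Fin r × Fin k} {x : FrameVert r k G part col ⊕ (Fin r × Fin k)}
    (hp : zNbhd r k G part col p x) (hq : zNbhd r k G part col q x) : p = q := by
  rcases hp with rfl | ⟨u, rfl, rfl⟩ <;> rcases hq with h | ⟨v, h, h'⟩ <;> simp_all

lemma domGraph_adj_z {x : FrameVert r k G part col ⊕ (Fin r × Fin k)} {p : Fin r × Fin k}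
    (h : (domGraph r k G part col).Adj x (Sum.inr p)) : zNbhd r k G part col p x := by
  rcases x with (u | ρ) | q
  · right
    simpa [domGraph, Prod.ext_iff] using h
  · simp [domGraph] at h
  · simp [domGraph] at h

lemma domGraph_adj_vert {u v : V} (hne : u ≠ v) (h : vLab r k part col u = vLab r k part col v) :
    (domGraph r k G part col).Adj (Sum.inl (Sum.inl u)) (Sum.inl (Sum.inl v)) := by
  rw [domGraph, SimpleGraph.fromRel_adj]
  exact ⟨by simpa using hne, Or.inl (Or.inr h)⟩

lemma domGraph_adj_vert_z (u : V) :
    (domGraph r k G part col).Adj (Sum.inl (Sum.inl u)) (Sum.inr (vLab r k part col u)) := by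
  rw [domGraph, SimpleGraph.fromRel_adj]
  exact ⟨by simp, Or.inl ⟨rfl, rfl⟩⟩

lemma domGraph_adj_subdiv {u : V} {ρ : SubdivVert r k G part col} :
    (domGraph r k G part col).Adj (Sum.inl (Sum.inl u)) (Sum.inl (Sum.inr ρ)) ↔
      (vLab r k part col u = vLab r k part col ρ.val.1 ∧ u ≠ ρ.val.1) ∨
      (vLab r k part col u = vLab r k part col ρ.val.2 ∧ u ≠ ρ.val.2) := by
  rw [domGraph, SimpleGraph.fromRel_adj]
  simp only [frameRel, SamePart]
  simp

lemma domGraph_not_adj_z_subdiv {p : Fin r × Fin k} {ρ : SubdivVert r k G part col} :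
    ¬ (domGraph r k G part col).Adj (Sum.inr p) (Sum.inl (Sum.inr ρ)) := by
  simp [domGraph]

/-- A dominating set of size at most `r * k` is a transversal of the closed neighbourhoods of
the vertices `z_p`: these are pairwise disjoint, there are `r * k` of them, and each one meets
the set. -/
lemma exists_range_eq_of_dominating [Finite V]
    {S : Set (FrameVert r k G part col ⊕ (Fin r × Fin k))} (hcard : S.ncard ≤ r * k)
    (hdom : ∀ v, v ∈ S ∨ ∃ u ∈ S, (domGraph r k G part col).Adj u v) :
    ∃ s : Fin r × Fin k → FrameVert r k G part col ⊕ (Fin r × Fin k),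
      (∀ p, zNbhd r k G part col p (s p)) ∧ Set.range s = S := by
  have hmeet : ∀ p, ∃ x ∈ S, zNbhd r k G part col p x := by
    intro p
    rcases hdom (Sum.inr p) with h | ⟨u, hu, hadj⟩
    · exact ⟨_, h, Or.inl rfl⟩
    · exact ⟨u, hu, domGraph_adj_z r k G part col hadj⟩
  choose s hsS hs using hmeet
  have hinj : Function.Injective s := fun p q hpq =>
    zNbhd_unique r k G part col (hs p) (hpq ▸ hs q)
  refine ⟨s, hs, Set.eq_of_subset_of_ncard_le (Set.range_subset_iff.2 hsS) ?_ (Set.toFinite S)⟩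
  rw [← Set.image_univ, Set.ncard_image_of_injective _ hinj]
  simpa [Set.ncard_univ] using hcard

/-- The vertices picked out by a small dominating set, one per part, span no edge between
different parts. The hypothesis `hsw` leaves the choice of `w p` in `V(p)` free when the
transversal `s` selects `z_p`. -/
lemma not_adj_of_dominating {s : Fin r × Fin k → FrameVert r k G part col ⊕ (Fin r × Fin k)}
    {w : Fin r × Fin k → V} (hs : ∀ p, zNbhd r k G part col p (s p))
    (hw : ∀ p, vLab r k part col (w p) = p)
    (hsw : ∀ p u, s p = Sum.inl (Sum.inl u) → u = w p)
    (hdom : ∀ v, v ∈ Set.range s ∨ ∃ u ∈ Set.range s, (domGraph r k G part col).Adj u v)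
    {p q : Fin r × Fin k} (hpq : LabLt r k p q) : ¬ G.Adj (w p) (w q) := by
  intro hadj
  let ρ : SubdivVert r k G part col := ⟨(w p, w q), hadj, by simpa only [hw] using hpq⟩
  have key : ∀ t u, s t = Sum.inl (Sum.inl u) → u = w (vLab r k part col u) := by
    intro t u h
    have ht : vLab r k part col u = t :=
      zNbhd_unique r k G part col (Or.inr ⟨u, h, rfl⟩) (hs t)
    rw [ht]
    exact hsw t u h
  rcases hdom (Sum.inl (Sum.inr ρ)) with ⟨t, ht⟩ | ⟨_, ⟨t, rfl⟩, h⟩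
  · rcases hs t with h | ⟨u, h, -⟩ <;> simp [h] at ht
  · rcases hs t with h' | ⟨u, h', -⟩
    · rw [h'] at h
      exact domGraph_not_adj_z_subdiv r k G part col h
    · rw [h', domGraph_adj_subdiv] at h
      have hu := key t u h'
      rcases h with ⟨hl, hne⟩ | ⟨hl, hne⟩ <;> rw [hl, hw] at hu <;> exact hne hu

/-- `G''` has a dominating set of size at most `r·k` if and only if `G` has a chained
multicolored independent set. -/
theorem domGraph_dominating_set_iff_chained_independent_set
    [Fintype V]
    (hedge : ∀ u v, G.Adj u v → (part u : ℕ) ≤ (part v : ℕ) + 1)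
    (hne : ∀ (i : Fin r) (j : Fin k), ∃ v : V, part v = i ∧ col v = j) :
    (∃ S : Set (FrameVert r k G part col ⊕ (Fin r × Fin k)),
      S.ncard ≤ r * k ∧
      ∀ v, v ∈ S ∨ ∃ u ∈ S, (domGraph r k G part col).Adj u v) ↔
    HasChainedMulticoloredIndependentSet r k G part col := by
  constructor
  · rintro ⟨S, hcard, hdom⟩
    obtain ⟨s, hs, rfl⟩ := exists_range_eq_of_dominating r k G part col hcard hdom
    have hex : ∀ p, ∃ v, vLab r k part col v = p ∧ ∀ u, s p = Sum.inl (Sum.inl u) → u = v := by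
      intro p
      rcases hs p with h | ⟨u, h, hu⟩
      · obtain ⟨v, hv⟩ := hne p.1 p.2
        exact ⟨v, Prod.ext hv.1 hv.2, by simp [h]⟩
      · exact ⟨u, hu, fun u' hu' => by simpa [h, eq_comm] using hu'⟩
    choose w hw hsw using hex
    have hindep : ∀ {p q}, LabLt r k p q → ¬ G.Adj (w p) (w q) :=
      fun hpq => not_adj_of_dominating r k G part col hs hw hsw hdom hpq
    refine ⟨Set.range w, ?_, fun i j => ⟨w (i, j), ⟨_, rfl⟩, by simpa using hw (i, j)⟩⟩
    rintro _ ⟨p, rfl⟩ _ ⟨q, rfl⟩ huv - - hadj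
    have hpq : p ≠ q := fun h => huv (h ▸ rfl)
    have hlex : LabLt r k p q ∨ LabLt r k q p := by
      rw [Ne, Prod.ext_iff] at hpq
      unfold LabLt
      grind
    rcases hlex with h | h
    · exact hindep h hadj
    · exact hindep h hadj.symm
  · rintro ⟨W, hW, hall⟩
    have hex : ∀ p : Fin r × Fin k, ∃ v ∈ W, vLab r k part col v = p := fun p =>
      let ⟨v, hv, h1, h2⟩ := hall p.1 p.2
      ⟨v, hv, Prod.ext h1 h2⟩
    choose w hwW hw using hex
    refine ⟨Set.range fun p => Sum.inl (Sum.inl (w p)), ?_, ?_⟩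
    · rw [← Set.image_univ]
      refine (Set.ncard_image_le Set.finite_univ).trans ?_
      simp [Set.ncard_univ]
    · rintro ((v | ρ) | p)
      · by_cases h : w (vLab r k part col v) = v
        · exact Or.inl ⟨vLab r k part col v, congrArg (Sum.inl ∘ Sum.inl) h⟩
        · exact Or.inr ⟨_, ⟨_, rfl⟩, domGraph_adj_vert r k G part col h (hw _)⟩
      · right
        obtain ⟨⟨a, b⟩, hab, hlt⟩ := ρ
        -- `W` is independent, so it cannot contain both ends of the edge subdivided by `ρ`.
        by_cases ha : w (vLab r k part col a) = a
        · have hb : w (vLab r k part col b) ≠ b := fun hb =>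
            hW a (ha ▸ hwW _) b (hb ▸ hwW _) hab.ne (hedge _ _ hab) (hedge _ _ hab.symm) hab
          exact ⟨_, ⟨vLab r k part col b, rfl⟩,
            (domGraph_adj_subdiv r k G part col).2 (Or.inr ⟨hw _, hb⟩)⟩
        · exact ⟨_, ⟨vLab r k part col a, rfl⟩,
            (domGraph_adj_subdiv r k G part col).2 (Or.inl ⟨hw _, ha⟩)⟩
      · right
        refine ⟨_, ⟨p, rfl⟩, ?_⟩
        have := domGraph_adj_vert_z r k G part col (w p)
        rwa [hw] at this

end DS
end

section
/- Let (G, V₁,…,V_r, f) with f : V(G) → [k] be an instance of Chained Multicolored Clique, and let G'' be obtained from the frame graph G' of this instance by making every part P ∈ 𝒫 a clique, then adding for each P ∈ 𝒫 two new vertices a_P and b_P with N(a_P) = N(b_P) = P, and then adding one further vertex c with N(c) = V(G'). Then G'' has an induced subgraph that is a forest on at least 3|𝒫| + 1 = 6k²(r−1) + 3k + 1 vertices if and only if G has a chained multicolored clique. -/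
section FVS

variable {V : Type*} (r k : ℕ) (G : SimpleGraph V) (part : V → Fin r) (col : V → Fin k)

/-- Indices of the parts of the partition `𝒫` of the frame graph: the parts `V(i,j)`
(left summand) and the subdivision parts `R(i₁,j₁,i₂,j₂)`, indexed by lexicographically
ordered pairs of part indices lying on consecutive layers (right summand). -/
abbrev PartIdx : Type _ :=
  (Fin r × Fin k) ⊕
    {pq : (Fin r × Fin k) × (Fin r × Fin k) // LabLt r k pq.1 pq.2 ∧ (pq.2.1 : ℕ) ≤ (pq.1.1 : ℕ) + 1}

/-- Membership of a frame-graph vertex in a part of `𝒫`. -/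
def memPart : FrameVert r k G part col → PartIdx r k → Prop
  | Sum.inl u, Sum.inl p => vLab r k part col u = p
  | Sum.inr ρ, Sum.inr pq => (vLab r k part col ρ.val.1, vLab r k part col ρ.val.2) = pq.val
  | _, _ => False

/-- The graph `G''`: the frame graph with every part of `𝒫` turned into a clique,
together with two new vertices `a_P = (P, false)` and `b_P = (P, true)` for each part
`P ∈ 𝒫` with `N(a_P) = N(b_P) = P`, and one further vertex `c` adjacent to all
vertices of the frame graph. -/
def fvsGraph :
    SimpleGraph (FrameVert r k G part col ⊕ ((PartIdx r k × Bool) ⊕ Unit)) :=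
  SimpleGraph.fromRel (fun x y =>
    match x, y with
    | Sum.inl x, Sum.inl y => frameRel r k G part col x y ∨ SamePart r k G part col x y
    | Sum.inl x, Sum.inr (Sum.inl (P, _)) => memPart r k G part col x P
    | Sum.inl _, Sum.inr (Sum.inr _) => True
    | _, _ => False)

/-! ### Acyclicity criteria -/

/-- A graph is acyclic as soon as some rank function gives every vertex at most one neighbour of
at most its own rank: a vertex of maximal rank on a cycle would have two. -/
lemma isAcyclic_of_rank {α : Type*} (H : SimpleGraph α) (rk : α → ℕ)
    (h : ∀ v x y, H.Adj v x → H.Adj v y → rk x ≤ rk v → rk y ≤ rk v → x = y) :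
    H.IsAcyclic := by
  classical
  intro u p hp
  obtain ⟨v, hv, hmax⟩ := p.support.toFinset.exists_max_image rk
    ⟨u, by simp⟩
  have hv' : v ∈ p.support := by simpa using hv
  have hq : (p.rotate v hv').IsCycle := (SimpleGraph.Walk.isCycle_rotate hv').2 hp
  have hle : ∀ w ∈ (p.rotate v hv').support, rk w ≤ rk v := fun w hw =>
    hmax w (by simpa using hw)
  exact hq.snd_ne_penultimate (h v _ _
    (SimpleGraph.Walk.adj_snd hq.not_nil) (SimpleGraph.Walk.adj_penultimate hq.not_nil).symm
    (hle _ (SimpleGraph.Walk.getVert_mem_support _ _))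
    (hle _ (SimpleGraph.Walk.getVert_mem_support _ _)))

lemma not_triangle_of_isAcyclic_induce {α : Type*} {H : SimpleGraph α} {S : Set α}
    (hS : (H.induce S).IsAcyclic) {x y z : α} (hx : x ∈ S) (hy : y ∈ S) (hz : z ∈ S)
    (hxy : H.Adj x y) (hyz : H.Adj y z) (hxz : H.Adj x z) : False := by
  classical
  have hclique : (H.induce S).IsNClique 3 {⟨x, hx⟩, ⟨y, hy⟩, ⟨z, hz⟩} :=
    SimpleGraph.is3Clique_triple_iff.2 ⟨hxy, hxz, hyz⟩
  obtain ⟨u, w, hw, -⟩ := SimpleGraph.is3Clique_iff_exists_cycle_length_three.1 ⟨_, hclique⟩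
  exact hS w hw

/-! ### Induced forests in gadget graphs -/

section Gadget

variable {F I : Type*}

/-- The group of a gadget graph containing a vertex: `some P` for `a_P`, `b_P` and the vertices in
the part `P`, and `none` for the apex `c`. -/
def gadgetGroup (π : F → I) : F ⊕ ((I × Bool) ⊕ Unit) → Option I
  | Sum.inl x => some (π x)
  | Sum.inr (Sum.inl (P, _)) => some P
  | Sum.inr (Sum.inr _) => none

/-- The distance from the apex in the tree formed by representatives, leaves and apex. -/
def gadgetRank : F ⊕ ((I × Bool) ⊕ Unit) → ℕ
  | Sum.inl _ => 1
  | Sum.inr (Sum.inl _) => 2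
  | Sum.inr (Sum.inr _) => 0

variable (Γ : SimpleGraph (F ⊕ ((I × Bool) ⊕ Unit))) (π : F → I)

open Classical in
/-- An induced forest meets each group in at most three vertices, and in at most two if it contains
no vertex of the part itself. -/
lemma card_group_le
    (hpart : ∀ x y, x ≠ y → π x = π y → Γ.Adj (Sum.inl x) (Sum.inl y))
    (hleaf : ∀ x P b, Γ.Adj (Sum.inl x) (Sum.inr (Sum.inl (P, b))) ↔ π x = P)
    (T : Finset (F ⊕ ((I × Bool) ⊕ Unit))) (hT : (Γ.induce (T : Set _)).IsAcyclic)
    (P : I) :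
    (T.filter (gadgetGroup π · = some P)).card ≤ 3 ∧
    (3 ≤ (T.filter (gadgetGroup π · = some P)).card → ∃ x, Sum.inl x ∈ T ∧ π x = P) := by
  set U := T.filter (gadgetGroup π · = some P) with hU
  set L : Finset (F ⊕ ((I × Bool) ⊕ Unit)) :=
    {Sum.inr (Sum.inl (P, false)), Sum.inr (Sum.inl (P, true))} with hL
  have hL2 : L.card ≤ 2 := Finset.card_le_two
  have hcases : ∀ z ∈ U, z ∈ L ∨ ∃ x, z = Sum.inl x ∧ π x = P := by
    intro z hz
    replace hz := (Finset.mem_filter.1 hz).2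
    rcases z with x | ⟨Q, _ | _⟩ | _ <;> simpa [gadgetGroup, hL] using hz
  have hsplit : U.card ≤ (U \ L).card + L.card := Finset.card_le_card_sdiff_add_card
  constructor
  · by_contra! h4
    obtain ⟨z₁, h₁, z₂, h₂, hne⟩ := Finset.one_lt_card.1 (show 1 < (U \ L).card by omega)
    rw [Finset.mem_sdiff] at h₁ h₂
    obtain ⟨x, rfl, hx⟩ := (hcases z₁ h₁.1).resolve_left h₁.2
    obtain ⟨y, rfl, hy⟩ := (hcases z₂ h₂.1).resolve_left h₂.2
    -- Any further vertex of the group closes a triangle with these two.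
    obtain ⟨z, hz, hzn⟩ := Finset.exists_mem_notMem_of_card_lt_card
      (show ({Sum.inl x, Sum.inl y} : Finset (F ⊕ ((I × Bool) ⊕ Unit))).card < U.card from
        Finset.card_le_two.trans_lt (by omega))
    have hxz : Γ.Adj (Sum.inl x) z ∧ Γ.Adj (Sum.inl y) z := by
      simp only [Finset.mem_insert, Finset.mem_singleton, not_or] at hzn
      rcases hcases z hz with hz | ⟨w, rfl, hw⟩
      · simp only [hL, Finset.mem_insert, Finset.mem_singleton] at hz
        rcases hz with rfl | rfl <;> simp [hleaf, hx, hy]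
      · exact ⟨hpart _ _ (fun h => hzn.1 (by rw [h])) (hx.trans hw.symm),
          hpart _ _ (fun h => hzn.2 (by rw [h])) (hy.trans hw.symm)⟩
    exact not_triangle_of_isAcyclic_induce hT
      (Finset.mem_coe.2 (Finset.mem_filter.1 h₁.1).1)
      (Finset.mem_coe.2 (Finset.mem_filter.1 h₂.1).1)
      (Finset.mem_coe.2 (Finset.mem_filter.1 hz).1)
      (hpart x y (fun h => hne (by rw [h])) (hx.trans hy.symm)) hxz.2 hxz.1
  · intro h3
    obtain ⟨z, hz⟩ := Finset.card_pos.1 (show 0 < (U \ L).card by omega)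
    rw [Finset.mem_sdiff] at hz
    obtain ⟨x, rfl, hx⟩ := (hcases z hz.1).resolve_left hz.2
    exact ⟨x, (Finset.mem_filter.1 hz.1).1, hx⟩

/-- The gadgets turn the search for a large induced forest into the search for pairwise
non-adjacent representatives of the parts, i.e. of the fibres of `π`. -/
lemma exists_forest_iff_exists_section [Finite F] [Fintype I]
    (hpart : ∀ x y, x ≠ y → π x = π y → Γ.Adj (Sum.inl x) (Sum.inl y))
    (hleaf : ∀ x P b, Γ.Adj (Sum.inl x) (Sum.inr (Sum.inl (P, b))) ↔ π x = P)
    (hapex : ∀ x, Γ.Adj (Sum.inl x) (Sum.inr (Sum.inr ())))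
    (hinr : ∀ y z, ¬ Γ.Adj (Sum.inr y) (Sum.inr z)) :
    (∃ S : Set (F ⊕ ((I × Bool) ⊕ Unit)),
      3 * Fintype.card I + 1 ≤ S.ncard ∧ (Γ.induce S).IsAcyclic) ↔
    ∃ s : I → F, (∀ P, π (s P) = P) ∧ ∀ P Q, ¬ Γ.Adj (Sum.inl (s P)) (Sum.inl (s Q)) := by
  classical
  constructor
  · rintro ⟨S, hcard, hS⟩
    obtain ⟨T, rfl⟩ : ∃ T : Finset (F ⊕ ((I × Bool) ⊕ Unit)), (T : Set _) = S :=
      ⟨S.toFinite.toFinset, by simp⟩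
    rw [Set.ncard_coe_finset] at hcard
    have hgrp := card_group_le Γ π hpart hleaf T hS
    have hnone : T.filter (gadgetGroup π · = none) ⊆ {Sum.inr (Sum.inr ())} := by
      intro z hz
      replace hz := (Finset.mem_filter.1 hz).2
      rcases z with x | ⟨Q, b⟩ | _ <;> simp [gadgetGroup] at hz ⊢
    have hnone1 := Finset.card_le_card hnone
    rw [Finset.card_singleton] at hnone1
    have hsum : T.card = (T.filter (gadgetGroup π · = none)).card +
        ∑ P : I, (T.filter (gadgetGroup π · = some P)).card := by
      rw [Finset.card_eq_sum_card_fiberwise (f := gadgetGroup π) (t := Finset.univ)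
        (fun _ _ => Finset.mem_coe.2 (Finset.mem_univ _)), Fintype.sum_option]
    have hconst : ∑ _P : I, 3 = 3 * Fintype.card I := by simp [mul_comm]
    have hle : ∑ P : I, (T.filter (gadgetGroup π · = some P)).card ≤ ∑ _P : I, 3 :=
      Finset.sum_le_sum fun P _ => (hgrp P).1
    have hapexT : Sum.inr (Sum.inr ()) ∈ T := by
      obtain ⟨z, hz⟩ := Finset.card_pos.1
        (show 0 < (T.filter (gadgetGroup π · = none)).card by omega)
      obtain rfl := Finset.mem_singleton.1 (hnone hz)
      exact (Finset.mem_filter.1 hz).1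
    have hrep : ∀ P, ∃ x, Sum.inl x ∈ T ∧ π x = P := by
      intro P
      refine (hgrp P).2 ?_
      by_contra! hlt
      have := Finset.sum_lt_sum (fun P _ => (hgrp P).1) ⟨P, Finset.mem_univ P, hlt⟩
      omega
    choose s hsT hsπ using hrep
    exact ⟨s, hsπ, fun P Q hadj => not_triangle_of_isAcyclic_induce hS (hsT P) (hsT Q) hapexT
      hadj (hapex _) (hapex _)⟩
  · rintro ⟨s, hsπ, hind⟩
    have hinj : Function.Injective s := Function.LeftInverse.injective hsπ
    refine ⟨Set.range (Sum.map s id), ?_, isAcyclic_of_rank _ (fun v => gadgetRank v.1) ?_⟩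
    · rw [Set.ncard_range_of_injective (hinj.sumMap Function.injective_id)]
      simp only [Nat.card_eq_fintype_card, Fintype.card_sum, Fintype.card_prod,
        Fintype.card_bool, Fintype.card_unit]
      omega
    · rintro ⟨_, v, rfl⟩ ⟨_, x, rfl⟩ ⟨_, y, rfl⟩ hvx hvy hx hy
      simp only [SimpleGraph.comap_adj, Function.Embedding.subtype_apply] at hvx hvy
      refine Subtype.ext ?_
      rcases v with p | ⟨P, b⟩ | _ <;> rcases x with q | ⟨Q, b'⟩ | _ <;>
        rcases y with q' | ⟨Q', b''⟩ | _ <;>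
        simp only [Sum.map_inl, Sum.map_inr, id, hind, hinr, gadgetRank] at hvx hvy hx hy ⊢ <;>
        first
        | omega
        | (rw [SimpleGraph.adj_comm, hleaf, hsπ] at hvx hvy
           rw [hvx, hvy])

end Gadget

/-! ### Representatives of the frame parts and chained cliques -/

lemma labLt_or_labLt_of_ne {p q : Fin r × Fin k} (h : p ≠ q) : LabLt r k p q ∨ LabLt r k q p := by
  rcases lt_trichotomy p.1 q.1 with h1 | h1 | h1
  · exact Or.inl (Or.inl h1)
  · rcases lt_trichotomy p.2 q.2 with h2 | h2 | h2
    · exact Or.inl (Or.inr ⟨h1, h2⟩)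
    · exact absurd (Prod.ext h1 h2) h
    · exact Or.inr (Or.inr ⟨h1.symm, h2⟩)
  · exact Or.inr (Or.inl h1)

lemma LabLt.ne' {p q : Fin r × Fin k} (h : LabLt r k p q) : p ≠ q := by
  rintro rfl
  rcases h with h | h
  · exact lt_irrefl _ h
  · exact lt_irrefl _ h.2

lemma LabLt.fst_le {p q : Fin r × Fin k} (h : LabLt r k p q) : (p.1 : ℕ) ≤ q.1 := by
  rcases h with h | h
  · exact le_of_lt h
  · rw [h.1]

/-- The index of the part of `𝒫` containing a vertex of the frame graph. For subdivision vertices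
it exists because every edge of `G` joins vertices of equal or consecutive layers. -/
def partOf (hedge : ∀ u v, G.Adj u v → (part u : ℕ) ≤ (part v : ℕ) + 1) :
    FrameVert r k G part col → PartIdx r k
  | Sum.inl u => Sum.inl (vLab r k part col u)
  | Sum.inr ρ => Sum.inr ⟨(vLab r k part col ρ.val.1, vLab r k part col ρ.val.2),
      ρ.2.2, hedge _ _ ρ.2.1.symm⟩

variable {r k G part col}

lemma memPart_iff (hedge : ∀ u v, G.Adj u v → (part u : ℕ) ≤ (part v : ℕ) + 1)
    (x : FrameVert r k G part col) (P : PartIdx r k) :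
    memPart r k G part col x P ↔ partOf r k G part col hedge x = P := by
  rcases x with u | ρ <;> rcases P with p | pq <;> simp [memPart, partOf, Subtype.ext_iff]

lemma samePart_iff (hedge : ∀ u v, G.Adj u v → (part u : ℕ) ≤ (part v : ℕ) + 1)
    (x y : FrameVert r k G part col) :
    SamePart r k G part col x y ↔
      partOf r k G part col hedge x = partOf r k G part col hedge y := by
  rcases x with u | ρ <;> rcases y with v | ρ' <;> simp [SamePart, partOf]

/-- Pairwise non-adjacent representatives of the parts are the same as a chained multicolored
clique: the representative of a subdivision part is the subdivided edge between the representatives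
of its two end parts. -/
lemma exists_section_iff_chained_clique
    (hedge : ∀ u v, G.Adj u v → (part u : ℕ) ≤ (part v : ℕ) + 1) :
    (∃ s : PartIdx r k → FrameVert r k G part col,
      (∀ P, partOf r k G part col hedge (s P) = P) ∧
      ∀ P Q, ¬ (fvsGraph r k G part col).Adj (Sum.inl (s P)) (Sum.inl (s Q))) ↔
    HasChainedMulticoloredClique r k G part col := by
  constructor
  · rintro ⟨s, hs, hind⟩
    have hv : ∀ p, ∃ u, s (Sum.inl p) = Sum.inl u ∧ vLab r k part col u = p := by
      intro p
      have h := hs (Sum.inl p)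
      rcases hsp : s (Sum.inl p) with u | ρ <;> rw [hsp] at h
      · exact ⟨u, rfl, Sum.inl.inj h⟩
      · cases h
    choose w hw hwl using hv
    have key : ∀ p q, LabLt r k p q → (q.1 : ℕ) ≤ (p.1 : ℕ) + 1 → G.Adj (w p) (w q) := by
      intro p q hpq hle
      have h := hs (Sum.inr ⟨(p, q), hpq, hle⟩)
      rcases hsp : s (Sum.inr ⟨(p, q), hpq, hle⟩) with u | ρ <;> rw [hsp] at h
      · cases h
      have hlab := congrArg Subtype.val (Sum.inr.inj h)
      simp only [Prod.mk.injEq] at hlab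
      have hnot : ∀ l, ¬ frameRel r k G part col (Sum.inl (w l)) (Sum.inr ρ) := by
        intro l hl
        refine hind (Sum.inl l) (Sum.inr ⟨(p, q), hpq, hle⟩) ?_
        rw [hw, hsp]
        exact ⟨by simp, Or.inl (Or.inl hl)⟩
      have h1 : w p = ρ.val.1 := by
        by_contra hne
        exact hnot p (Or.inl ⟨(hwl p).trans hlab.1.symm, hne⟩)
      have h2 : w q = ρ.val.2 := by
        by_contra hne
        exact hnot q (Or.inr ⟨(hwl q).trans hlab.2.symm, hne⟩)
      rw [h1, h2]
      exact ρ.2.1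
    refine ⟨Set.range w, ?_, fun i j => ⟨w (i, j), ⟨_, rfl⟩, ?_⟩⟩
    · rintro _ ⟨p, rfl⟩ _ ⟨q, rfl⟩ hne hle hle'
      have hp : part (w p) = p.1 := congrArg Prod.fst (hwl p)
      have hq : part (w q) = q.1 := congrArg Prod.fst (hwl q)
      rw [hp, hq] at hle hle'
      rcases labLt_or_labLt_of_ne r k (fun h => hne (congrArg w h)) with h | h
      · exact key p q h hle'
      · exact (key q p h hle).symm
    · exact Prod.ext_iff.1 (hwl (i, j))
  · rintro ⟨W, hclique, hcol⟩
    have hcol' : ∀ p : Fin r × Fin k, ∃ v ∈ W, vLab r k part col v = p := fun p =>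
      let ⟨v, hv, h1, h2⟩ := hcol p.1 p.2
      ⟨v, hv, Prod.ext h1 h2⟩
    choose w hwW hwl using hcol'
    have hpart : ∀ p, part (w p) = p.1 := fun p => congrArg Prod.fst (hwl p)
    have hadj : ∀ p q, LabLt r k p q → (q.1 : ℕ) ≤ (p.1 : ℕ) + 1 → G.Adj (w p) (w q) := by
      intro p q hpq hle
      refine hclique _ (hwW p) _ (hwW q) ?_ ?_ ?_
      · intro h
        exact LabLt.ne' r k hpq (by rw [← hwl p, ← hwl q, h])
      · rw [hpart, hpart]
        have := LabLt.fst_le r k hpq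
        omega
      · rw [hpart, hpart]
        exact hle
    let s : PartIdx r k → FrameVert r k G part col := fun P => match P with
      | Sum.inl p => Sum.inl (w p)
      | Sum.inr pq => Sum.inr ⟨(w pq.1.1, w pq.1.2), hadj _ _ pq.2.1 pq.2.2, by
          rw [hwl, hwl]; exact pq.2.1⟩
    have hs : ∀ P, partOf r k G part col hedge (s P) = P := by
      rintro (p | pq)
      · exact congrArg Sum.inl (hwl p)
      · exact congrArg Sum.inr (Subtype.ext (Prod.ext (hwl _) (hwl _)))
    have hrel : ∀ P Q, s P ≠ s Q → ¬ frameRel r k G part col (s P) (s Q) := by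
      rintro (p | pq) (q | pq') hne h
      · have hpq : p = q := (hwl p).symm.trans (h.2.trans (hwl q))
        exact hne (by rw [hpq])
      · rcases h with ⟨h1, h2⟩ | ⟨h1, h2⟩
        · exact h2 (congrArg w ((hwl p).symm.trans (h1.trans (hwl _))))
        · exact h2 (congrArg w ((hwl p).symm.trans (h1.trans (hwl _))))
      · exact h
      · exact h
    have hsame : ∀ P Q, s P ≠ s Q → ¬ SamePart r k G part col (s P) (s Q) := by
      intro P Q hne h
      rw [samePart_iff hedge, hs, hs] at h
      exact hne (congrArg s h)
    refine ⟨s, hs, ?_⟩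
    rintro P Q ⟨hne, h⟩
    have hne' : s P ≠ s Q := fun h => hne (congrArg Sum.inl h)
    rcases h with (h | h) | (h | h)
    · exact hrel P Q hne' h
    · exact hsame P Q hne' h
    · exact hrel Q P hne'.symm h
    · exact hsame Q P hne'.symm h

variable (r k G part col)

/-- `G''` has an induced forest on at least `3|𝒫| + 1` vertices if and only if `G`
has a chained multicolored clique. -/
theorem fvsGraph_induced_forest_iff_chained_clique
    [Fintype V] [DecidableEq V] [DecidableRel G.Adj]
    (hedge : ∀ u v, G.Adj u v → (part u : ℕ) ≤ (part v : ℕ) + 1) :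
    (∃ S : Set (FrameVert r k G part col ⊕ ((PartIdx r k × Bool) ⊕ Unit)),
      3 * Fintype.card (PartIdx r k) + 1 ≤ S.ncard ∧
      ((fvsGraph r k G part col).induce S).IsAcyclic) ↔
    HasChainedMulticoloredClique r k G part col := by
  have : Finite (FrameVert r k G part col) := inferInstance
  rw [← exists_section_iff_chained_clique hedge]
  refine exists_forest_iff_exists_section _ (partOf r k G part col hedge) ?_ ?_ ?_ ?_
  · intro x y hne h
    exact ⟨fun h => hne (Sum.inl.inj h), Or.inl (Or.inr ((samePart_iff hedge x y).2 h))⟩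
  · intro x P b
    rw [← memPart_iff hedge]
    simp [fvsGraph]
  · intro x
    simp [fvsGraph]
  · intro y z
    simp [fvsGraph]

end FVS
end

section
/- Let (G, V₁,…,V_r, f) with f : V(G) → [k] be an instance of Chained Multicolored Clique, and let (G'', L'') be obtained from the frame graph G' of this instance as follows. For each part P ∈ 𝒫, add two new vertices a(P) and b(P) and add edges so that P ∪ {a(P), b(P)} induces a path from a(P) to b(P) (with the vertices of P arranged in some order along the path). The lists are: for each P = V(i,j), every vertex of P has list {1,2,3}; if |P| is even then a(P) and b(P) both have list {1}, and if |P| is odd then a(P) has list {1} and b(P) has list {2}. For each P = R(i₁,j₁,i₂,j₂), every vertex of P has list {3,4,5}; if |P| is even then a(P) and b(P) both have list {5}, and if |P| is odd then a(P) has list {5} and b(P) has list {4}. Then (G'', L'') has a proper list coloring if and only if G has a chained multicolored clique. -/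
section ListCol

variable {V : Type*} (r k : ℕ) (G : SimpleGraph V) (part : V → Fin r) (col : V → Fin k)

/-- The number of vertices of a part `P` of `𝒫`. -/
noncomputable def partSize (P : PartIdx r k) : ℕ :=
  Nat.card {x : FrameVert r k G part col // memPart r k G part col x P}

/-- The adjacencies of the frame graph between a vertex and a subdivision vertex
(the edges of the frame graph that are kept in `G''`). -/
def frameCrossRel : FrameVert r k G part col → FrameVert r k G part col → Prop
  | Sum.inl u, Sum.inr ρ =>
      (vLab r k part col u = vLab r k part col ρ.val.1 ∧ u ≠ ρ.val.1) ∨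
      (vLab r k part col u = vLab r k part col ρ.val.2 ∧ u ≠ ρ.val.2)
  | _, _ => False

/-- The graph `G''`: for each part `P ∈ 𝒫` two new vertices `a(P) = (P, false)` and
`b(P) = (P, true)` are added, and edges are added so that `P ∪ {a(P), b(P)}` induces a
path from `a(P)` to `b(P)`, the vertices of `P` being arranged along the path in the
order given by the enumeration `ord P`. -/
def listColGraph
    (ord : ∀ P : PartIdx r k,
      Fin (partSize r k G part col P) ≃ {x : FrameVert r k G part col // memPart r k G part col x P}) :
    SimpleGraph (FrameVert r k G part col ⊕ (PartIdx r k × Bool)) :=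
  SimpleGraph.fromRel (fun x y =>
    match x, y with
    | Sum.inl x, Sum.inl y =>
        frameCrossRel r k G part col x y ∨
        (∃ (P : PartIdx r k) (i j : Fin (partSize r k G part col P)),
          (j : ℕ) = (i : ℕ) + 1 ∧ x = (ord P i).val ∧ y = (ord P j).val)
    | Sum.inl x, Sum.inr (P, false) =>
        ∃ i : Fin (partSize r k G part col P), (i : ℕ) = 0 ∧ x = (ord P i).val
    | Sum.inl x, Sum.inr (P, true) =>
        ∃ i : Fin (partSize r k G part col P),
          (i : ℕ) = partSize r k G part col P - 1 ∧ x = (ord P i).val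
    | Sum.inr (P, _), Sum.inr (Q, _) => P = Q ∧ partSize r k G part col P = 0
    | _, _ => False)

/-- The lists `L''`: vertices of a part `V(i,j)` get list `{1,2,3}`, vertices of a
part `R(i₁,j₁,i₂,j₂)` get list `{3,4,5}`; for a part `P` of even size, `a(P)` and
`b(P)` both get the list `{1}` (resp. `{5}` for subdivision parts), and for odd size
`a(P)` gets `{1}` (resp. `{5}`) and `b(P)` gets `{2}` (resp. `{4}`). -/
def listOf : FrameVert r k G part col ⊕ (PartIdx r k × Bool) → Set ℕ
  | Sum.inl (Sum.inl _) => {1, 2, 3}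
  | Sum.inl (Sum.inr _) => {3, 4, 5}
  | Sum.inr (Sum.inl _, false) => {1}
  | Sum.inr (Sum.inl p', true) =>
      if Even (partSize r k G part col (Sum.inl p')) then {1} else {2}
  | Sum.inr (Sum.inr _, false) => {5}
  | Sum.inr (Sum.inr pq, true) =>
      if Even (partSize r k G part col (Sum.inr pq)) then {5} else {4}

/-! ### Colors and membership in the parts -/

/-- The color that starts the alternation on the path of a part: the color of `a(P)`. -/
def xCol : PartIdx r k → ℕ
  | Sum.inl _ => 1
  | Sum.inr _ => 5

/-- The other ordinary color on the path of a part: the color of `b(P)` when `|P|` is odd. -/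
def yCol : PartIdx r k → ℕ
  | Sum.inl _ => 2
  | Sum.inr _ => 4

lemma xCol_ne_yCol (P : PartIdx r k) : xCol r k P ≠ yCol r k P := by
  cases P <;> simp [xCol, yCol]

lemma xCol_ne_three (P : PartIdx r k) : xCol r k P ≠ 3 := by
  cases P <;> simp [xCol]

lemma yCol_ne_three (P : PartIdx r k) : yCol r k P ≠ 3 := by
  cases P <;> simp [yCol]

lemma listOf_a (P : PartIdx r k) :
    listOf r k G part col (Sum.inr (P, false)) = {xCol r k P} := by
  cases P <;> rfl

lemma listOf_b (P : PartIdx r k) :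
    listOf r k G part col (Sum.inr (P, true)) =
      {if Even (partSize r k G part col P) then xCol r k P else yCol r k P} := by
  cases P <;> simp only [listOf, xCol, yCol] <;> split_ifs <;> rfl

lemma listOf_of_memPart {x : FrameVert r k G part col} {P : PartIdx r k}
    (h : memPart r k G part col x P) :
    listOf r k G part col (Sum.inl x) = {xCol r k P, yCol r k P, 3} := by
  rcases x with u | ρ <;> rcases P with p | pq
  · rfl
  · exact h.elim
  · exact h.elim
  · ext n
    simp only [listOf, xCol, yCol, Set.mem_insert_iff, Set.mem_singleton_iff]
    tauto

lemma memPart_unique {x : FrameVert r k G part col} {P Q : PartIdx r k}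
    (hP : memPart r k G part col x P) (hQ : memPart r k G part col x Q) : P = Q := by
  rcases x with u | ρ <;> rcases P with p | p <;> rcases Q with q | q <;>
    first
    | exact hP.elim
    | exact hQ.elim
    | skip
  · exact congrArg Sum.inl (Eq.trans (Eq.symm hP) hQ)
  · exact congrArg Sum.inr (Subtype.ext (Eq.trans (Eq.symm hP) hQ))

lemma exists_memPart (hedge : ∀ u v, G.Adj u v → (part u : ℕ) ≤ (part v : ℕ) + 1)
    (x : FrameVert r k G part col) : ∃ P, memPart r k G part col x P := by
  rcases x with u | ρ
  · exact ⟨Sum.inl (vLab r k part col u), rfl⟩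
  · exact ⟨Sum.inr ⟨(vLab r k part col ρ.val.1, vLab r k part col ρ.val.2), ρ.2.2,
      hedge _ _ ρ.2.1.symm⟩, rfl⟩

/-! ### Colorings of a single path -/

/-- A proper coloring of the path of a part must use `3`: otherwise the colors alternate, which is
incompatible with the color of the end `b(P)`. -/
lemma exists_eq_three_of_path {n : ℕ} {X Y : ℕ} (g : ℕ → ℕ) (hn : n ≠ 0)
    (hg : ∀ i < n, g i = X ∨ g i = Y ∨ g i = 3)
    (hstep : ∀ i, i + 1 < n → g i ≠ g (i + 1)) (h0 : g 0 ≠ X)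
    (hlast : g (n - 1) ≠ if Even n then X else Y) : ∃ i < n, g i = 3 := by
  by_contra! hno
  have key : ∀ i < n, g i = if Even i then Y else X := by
    intro i
    induction i with
    | zero =>
      intro hi
      have := hg 0 hi
      have := hno 0 hi
      simp only [Even.zero, if_true]
      tauto
    | succ i ih =>
      intro hi
      have h1 := ih (by omega)
      have h2 := hstep i hi
      have h3 := hg _ hi
      have h4 := hno _ hi
      simp only [Nat.even_add_one]
      by_cases hev : Even i <;> simp only [hev, if_true, if_false, not_true, not_false_eq_true]
        at h1 ⊢ <;> rw [h1] at h2 <;> grind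
  obtain ⟨m, rfl⟩ := Nat.exists_eq_succ_of_ne_zero hn
  have h1 := key m (by omega)
  rw [Nat.succ_eq_add_one, Nat.add_sub_cancel, h1] at hlast
  by_cases hev : Even m <;> simp [hev, Nat.even_add_one] at hlast

/-- The color of position `i` (counted from `0`) on the path of a part whose only vertex of color
`3` is at position `m`. The ends `a(P)` and `b(P)` follow the same rule at positions `-1` and
`|P|`. -/
def pathCol (X Y m i : ℕ) : ℕ :=
  if i = m then 3 else if i < m then (if Even i then Y else X) else (if Even i then X else Y)

lemma pathCol_mem (X Y m i : ℕ) : pathCol X Y m i ∈ ({X, Y, 3} : Set ℕ) := by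
  unfold pathCol
  split_ifs <;> simp

lemma pathCol_succ {X Y : ℕ} (hXY : X ≠ Y) (hX : X ≠ 3) (hY : Y ≠ 3) (m i : ℕ) :
    pathCol X Y m i ≠ pathCol X Y m (i + 1) := by
  unfold pathCol
  grind

lemma pathCol_zero_ne {X Y : ℕ} (hXY : X ≠ Y) (hX : X ≠ 3) (m : ℕ) :
    pathCol X Y m 0 ≠ X := by
  unfold pathCol
  grind

lemma pathCol_last_ne {X Y : ℕ} (hXY : X ≠ Y) (hX : X ≠ 3) (hY : Y ≠ 3) {m n : ℕ} (hm : m < n) :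
    pathCol X Y m (n - 1) ≠ if Even n then X else Y := by
  obtain ⟨n, rfl⟩ := Nat.exists_eq_succ_of_ne_zero (Nat.ne_zero_of_lt hm)
  have h := pathCol_succ hXY hX hY m n
  have h' : pathCol X Y m (n + 1) = if Even (n + 1) then X else Y := by
    unfold pathCol
    rw [if_neg (by omega), if_neg (by omega)]
  rwa [h'] at h

lemma pathCol_eq_three {X Y : ℕ} (hX : X ≠ 3) (hY : Y ≠ 3) {m i : ℕ}
    (h : pathCol X Y m i = 3) : i = m := by
  unfold pathCol at h
  grind

/-! ### Colorings of the whole graph and chained multicolored cliques -/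

lemma ne_of_fromRel_adj {α β : Type*} {R : α → α → Prop} {c : α → β}
    (h : ∀ x y, R x y → c x ≠ c y) : ∀ x y, (SimpleGraph.fromRel R).Adj x y → c x ≠ c y := by
  intro x y hxy
  rcases ((SimpleGraph.fromRel_adj R x y).mp hxy).2 with h' | h'
  · exact h x y h'
  · exact (h y x h').symm

section Coloring

variable (ord : ∀ P : PartIdx r k,
  Fin (partSize r k G part col P) ≃ {x : FrameVert r k G part col // memPart r k G part col x P})

/-- Every part has a vertex of color `3`. -/
lemma exists_three {c : FrameVert r k G part col ⊕ (PartIdx r k × Bool) → ℕ}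
    (hlist : ∀ v, c v ∈ listOf r k G part col v)
    (hc : ∀ u v, (listColGraph r k G part col ord).Adj u v → c u ≠ c v) (P : PartIdx r k) :
    ∃ x, memPart r k G part col x P ∧ c (Sum.inl x) = 3 := by
  have ha : c (Sum.inr (P, false)) = xCol r k P := by
    simpa [listOf_a] using hlist (Sum.inr (P, false))
  have hb : c (Sum.inr (P, true)) =
      if Even (partSize r k G part col P) then xCol r k P else yCol r k P := by
    have := hlist (Sum.inr (P, true))
    rwa [listOf_b, Set.mem_singleton_iff] at this
  have hn : partSize r k G part col P ≠ 0 := by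
    intro h0
    apply hc (Sum.inr (P, false)) (Sum.inr (P, true))
    · rw [listColGraph, SimpleGraph.fromRel_adj]
      exact ⟨by simp, Or.inl ⟨rfl, h0⟩⟩
    · rw [ha, hb, h0]
      simp
  -- Junk value `0` outside the range of positions.
  let g : ℕ → ℕ := fun i =>
    if h : i < partSize r k G part col P then c (Sum.inl (ord P ⟨i, h⟩).val) else 0
  have hgdef : ∀ i (h : i < partSize r k G part col P),
      g i = c (Sum.inl (ord P ⟨i, h⟩).val) := fun i h => dif_pos h
  obtain ⟨i, hi, h3⟩ := exists_eq_three_of_path (X := xCol r k P) (Y := yCol r k P) g hn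
    (by
      intro i hi
      have := hlist (Sum.inl (ord P ⟨i, hi⟩).val)
      rw [listOf_of_memPart r k G part col (ord P ⟨i, hi⟩).2] at this
      rw [hgdef i hi]
      simpa using this)
    (by
      intro i hi
      rw [hgdef i (by omega), hgdef _ hi]
      apply hc
      rw [listColGraph, SimpleGraph.fromRel_adj]
      refine ⟨?_, Or.inl (Or.inr ⟨P, ⟨i, by omega⟩, ⟨i + 1, hi⟩, rfl, rfl, rfl⟩)⟩
      intro h
      have := (ord P).injective (Subtype.ext (Sum.inl_injective h))
      simp at this)
    (by
      rw [hgdef 0 (by omega), ← ha]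
      apply hc
      rw [listColGraph, SimpleGraph.fromRel_adj]
      exact ⟨by simp, Or.inl ⟨⟨0, by omega⟩, rfl, rfl⟩⟩)
    (by
      rw [hgdef _ (by omega), ← hb]
      apply hc
      rw [listColGraph, SimpleGraph.fromRel_adj]
      exact ⟨by simp, Or.inl ⟨⟨partSize r k G part col P - 1, by omega⟩, rfl, rfl⟩⟩)
  exact ⟨_, (ord P ⟨i, hi⟩).2, by rw [← hgdef i hi, h3]⟩

lemma clique_of_coloring {c : FrameVert r k G part col ⊕ (PartIdx r k × Bool) → ℕ}
    (hlist : ∀ v, c v ∈ listOf r k G part col v)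
    (hc : ∀ u v, (listColGraph r k G part col ord).Adj u v → c u ≠ c v) :
    HasChainedMulticoloredClique r k G part col := by
  have h3 := exists_three r k G part col ord hlist hc
  have hw : ∀ p : Fin r × Fin k, ∃ u, vLab r k part col u = p ∧ c (Sum.inl (Sum.inl u)) = 3 := by
    intro p
    obtain ⟨u | ρ, hx, hx3⟩ := h3 (Sum.inl p)
    · exact ⟨u, hx, hx3⟩
    · exact hx.elim
  choose w hwl hw3 using hw
  have hcross : ∀ u (ρ : SubdivVert r k G part col),
      frameCrossRel r k G part col (Sum.inl u) (Sum.inr ρ) →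
      c (Sum.inl (Sum.inl u)) ≠ c (Sum.inl (Sum.inr ρ)) := by
    intro u ρ h
    apply hc
    rw [listColGraph, SimpleGraph.fromRel_adj]
    exact ⟨by simp, Or.inl (Or.inl h)⟩
  have hadj : ∀ p q : Fin r × Fin k, LabLt r k p q → (q.1 : ℕ) ≤ (p.1 : ℕ) + 1 →
      G.Adj (w p) (w q) := by
    intro p q hlt hle
    obtain ⟨u | ρ, hx, hx3⟩ := h3 (Sum.inr ⟨(p, q), hlt, hle⟩)
    · exact hx.elim
    · have hx' : vLab r k part col ρ.val.1 = p ∧ vLab r k part col ρ.val.2 = q :=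
        Prod.mk.inj hx
      have e1 : w p = ρ.val.1 := by
        by_contra hne
        exact hcross (w p) ρ (Or.inl ⟨(hwl p).trans hx'.1.symm, hne⟩) ((hw3 p).trans hx3.symm)
      have e2 : w q = ρ.val.2 := by
        by_contra hne
        exact hcross (w q) ρ (Or.inr ⟨(hwl q).trans hx'.2.symm, hne⟩) ((hw3 q).trans hx3.symm)
      rw [e1, e2]
      exact ρ.2.1
  refine ⟨Set.range w, ?_, fun i j => ⟨w (i, j), ⟨_, rfl⟩, Prod.mk.inj (hwl (i, j))⟩⟩
  rintro _ ⟨p, rfl⟩ _ ⟨q, rfl⟩ hne h1 h2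
  have hp : part (w p) = p.1 := congrArg Prod.fst (hwl p)
  have hq : part (w q) = q.1 := congrArg Prod.fst (hwl q)
  rw [hp, hq] at h1 h2
  have hpq : p ≠ q := fun h => hne (congrArg w h)
  have htri : LabLt r k p q ∨ LabLt r k q p := by
    rcases lt_trichotomy p.1 q.1 with h | h | h
    · exact Or.inl (Or.inl h)
    · rcases lt_trichotomy p.2 q.2 with h' | h' | h'
      · exact Or.inl (Or.inr ⟨h, h'⟩)
      · exact absurd (Prod.ext h h') hpq
      · exact Or.inr (Or.inr ⟨h.symm, h'⟩)
    · exact Or.inr (Or.inl h)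
  rcases htri with h | h
  · exact hadj p q h h2
  · exact (hadj q p h h1).symm

/-- One chosen vertex in each part, pairwise nonadjacent across `V`-parts and subdivision parts,
can be taken as the set of vertices of color `3` of a proper list coloring. -/
lemma exists_coloring
    (hedge : ∀ u v, G.Adj u v → (part u : ℕ) ≤ (part v : ℕ) + 1)
    (s : ∀ P : PartIdx r k, {x : FrameVert r k G part col // memPart r k G part col x P})
    (hs : ∀ P Q, ¬ frameCrossRel r k G part col (s P).val (s Q).val) :
    ∃ c : FrameVert r k G part col ⊕ (PartIdx r k × Bool) → ℕ,
      (∀ v, c v ∈ listOf r k G part col v) ∧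
      (∀ u v, (listColGraph r k G part col ord).Adj u v → c u ≠ c v) := by
  choose pt hpt using exists_memPart r k G part col hedge
  let pc : ∀ P : PartIdx r k, Fin (partSize r k G part col P) → ℕ := fun P i =>
    pathCol (xCol r k P) (yCol r k P) ((ord P).symm (s P)) i
  let c : FrameVert r k G part col ⊕ (PartIdx r k × Bool) → ℕ := fun v =>
    match v with
    | Sum.inl x => pc (pt x) ((ord (pt x)).symm ⟨x, hpt x⟩)
    | Sum.inr (P, false) => xCol r k P
    | Sum.inr (P, true) => if Even (partSize r k G part col P) then xCol r k P else yCol r k P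
  have hc : ∀ P x (h : memPart r k G part col x P),
      c (Sum.inl x) = pc P ((ord P).symm ⟨x, h⟩) := by
    intro P x h
    obtain rfl := memPart_unique r k G part col (hpt x) h
    rfl
  have hco : ∀ P i, c (Sum.inl (ord P i).val) = pc P i := by
    intro P i
    rw [hc P _ (ord P i).2]
    simp
  have hlist : ∀ v, c v ∈ listOf r k G part col v := by
    rintro (x | ⟨P, _ | _⟩)
    · rw [listOf_of_memPart r k G part col (hpt x)]
      exact pathCol_mem _ _ _ _
    · rw [listOf_a]
      exact rfl
    · rw [listOf_b]
      exact rfl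
  have h3 : ∀ x, c (Sum.inl x) = 3 → x = (s (pt x)).val := by
    intro x hx
    have := (ord (pt x)).symm.injective
      (Fin.ext (pathCol_eq_three (xCol_ne_three r k _) (yCol_ne_three r k _) hx))
    exact congrArg Subtype.val this
  have hsize : ∀ P, 0 < partSize r k G part col P := fun P => ((ord P).symm (s P)).pos
  have hcross : ∀ x y, frameCrossRel r k G part col x y → c (Sum.inl x) ≠ c (Sum.inl y) := by
    rintro (u | ρ) (v | σ) h heq
    · exact h
      -- The lists `{1, 2, 3}` and `{3, 4, 5}` meet only in `3`.
    · have hu : c (Sum.inl (Sum.inl u)) ∈ ({1, 2, 3} : Set ℕ) := hlist (Sum.inl (Sum.inl u))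
      have hσ : c (Sum.inl (Sum.inr σ)) ∈ ({3, 4, 5} : Set ℕ) := hlist (Sum.inl (Sum.inr σ))
      simp only [Set.mem_insert_iff, Set.mem_singleton_iff] at hu hσ
      have e1 := h3 _ (show c (Sum.inl (Sum.inl u)) = 3 by omega)
      have e2 := h3 _ (show c (Sum.inl (Sum.inr σ)) = 3 by omega)
      rw [e1, e2] at h
      exact hs _ _ h
    · exact h
    · exact h
  refine ⟨c, hlist, ?_⟩
  unfold listColGraph
  apply ne_of_fromRel_adj
  intro u v hrel
  rcases u with x | ⟨P, bP⟩
  · rcases v with y | ⟨Q, _ | _⟩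
    · rcases hrel with h | ⟨P, i, j, hij, rfl, rfl⟩
      · exact hcross x y h
      · rw [hco, hco]
        show pathCol _ _ _ _ ≠ pathCol _ _ _ _
        rw [hij]
        exact pathCol_succ (xCol_ne_yCol r k P) (xCol_ne_three r k P) (yCol_ne_three r k P) _ _
    · obtain ⟨i, hi, rfl⟩ := hrel
      rw [hco]
      show pathCol _ _ _ _ ≠ xCol r k Q
      rw [hi]
      exact pathCol_zero_ne (xCol_ne_yCol r k Q) (xCol_ne_three r k Q) _
    · obtain ⟨i, hi, rfl⟩ := hrel
      rw [hco]
      show pathCol _ _ _ _ ≠ if Even (partSize r k G part col Q) then xCol r k Q else yCol r k Q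
      rw [hi]
      exact pathCol_last_ne (xCol_ne_yCol r k Q) (xCol_ne_three r k Q) (yCol_ne_three r k Q)
        (Fin.is_lt _)
  · rcases v with y | ⟨Q, bQ⟩
    · exact hrel.elim
    · exact absurd hrel.2 (hsize P).ne'

lemma coloring_of_clique
    (hedge : ∀ u v, G.Adj u v → (part u : ℕ) ≤ (part v : ℕ) + 1)
    (h : HasChainedMulticoloredClique r k G part col) :
    ∃ c : FrameVert r k G part col ⊕ (PartIdx r k × Bool) → ℕ,
      (∀ v, c v ∈ listOf r k G part col v) ∧
      (∀ u v, (listColGraph r k G part col ord).Adj u v → c u ≠ c v) := by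
  obtain ⟨W, hW, hWp⟩ := h
  choose w₀ hmemW hpartw hcolw using hWp
  let w : Fin r × Fin k → V := fun p => w₀ p.1 p.2
  have hwl : ∀ p, vLab r k part col (w p) = p := fun p => Prod.ext (hpartw _ _) (hcolw _ _)
  have hadj : ∀ p q : Fin r × Fin k, LabLt r k p q → (q.1 : ℕ) ≤ (p.1 : ℕ) + 1 →
      G.Adj (w p) (w q) := by
    intro p q hlt hle
    have hp : part (w p) = p.1 := hpartw _ _
    have hq : part (w q) = q.1 := hpartw _ _
    apply hW _ (hmemW _ _) _ (hmemW _ _)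
    · intro he
      have hpq : p = q := by rw [← hwl p, ← hwl q]; exact congrArg _ he
      subst hpq
      rcases hlt with h | ⟨-, h⟩ <;> exact lt_irrefl _ h
    · show (part (w p) : ℕ) ≤ part (w q) + 1
      rw [hp, hq]
      rcases hlt with h | ⟨h, -⟩
      · have : (p.1 : ℕ) < q.1 := h
        omega
      · rw [h]
        omega
    · show (part (w q) : ℕ) ≤ part (w p) + 1
      rw [hp, hq]
      exact hle
  let s : ∀ P : PartIdx r k, {x : FrameVert r k G part col // memPart r k G part col x P} :=
    fun P => match P with
    | Sum.inl p => ⟨Sum.inl (w p), hwl p⟩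
    | Sum.inr pq => ⟨Sum.inr ⟨(w pq.val.1, w pq.val.2), hadj _ _ pq.2.1 pq.2.2, by
        rw [hwl, hwl]; exact pq.2.1⟩, Prod.ext (hwl _) (hwl _)⟩
  apply exists_coloring r k G part col ord hedge s
  rintro (p | p) (q | q) h
  · exact h
  · rcases h with ⟨he, hne⟩ | ⟨he, hne⟩
    · apply hne
      have he' : vLab r k part col (w p) = vLab r k part col (w q.val.1) := he
      rw [hwl, hwl] at he'
      exact congrArg w he'
    · apply hne
      have he' : vLab r k part col (w p) = vLab r k part col (w q.val.2) := he
      rw [hwl, hwl] at he'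
      exact congrArg w he'
  · exact h
  · exact h

end Coloring

/-- `(G'', L'')` has a proper list coloring if and only if `G` has a chained
multicolored clique. -/
theorem listColGraph_proper_coloring_iff_chained_clique
    [Fintype V] [DecidableEq V] [DecidableRel G.Adj]
    (hedge : ∀ u v, G.Adj u v → (part u : ℕ) ≤ (part v : ℕ) + 1)
    (ord : ∀ P : PartIdx r k,
      Fin (partSize r k G part col P) ≃ {x : FrameVert r k G part col // memPart r k G part col x P}) :
    (∃ c : FrameVert r k G part col ⊕ (PartIdx r k × Bool) → ℕ,
      (∀ v, c v ∈ listOf r k G part col v) ∧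
      (∀ u v, (listColGraph r k G part col ord).Adj u v → c u ≠ c v)) ↔
    HasChainedMulticoloredClique r k G part col := by
  constructor
  · rintro ⟨c, hlist, hc⟩
    exact clique_of_coloring r k G part col ord hlist hc
  · exact coloring_of_clique r k G part col ord hedge

end ListCol
end

section
/- Let G be a graph and Λ a linear order of V(G) whose mim-width is w ≥ 1. Let G' be obtained from G by adding one new vertex u adjacent to all vertices of G, and let Λ' be any linear order of V(G') whose restriction to V(G) equals Λ (i.e., u is inserted at an arbitrary position). Then the mim-width of Λ' in G' is at most w. -/
/-- The mim-width of the linear order `Λ` of `V(G)` is at most `w`: every induced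
matching across a cut `(prefix, complement)` of the order has size at most `w`. -/
def MimwidthLE {V : Type*} [Fintype V] (G : SimpleGraph V)
    (Λ : Fin (Fintype.card V) ≃ V) (w : ℕ) : Prop :=
  ∀ (i : ℕ) (M : Finset (V × V)),
    IsInducedMatchingAcross G (prefixSet Λ i) (prefixSet Λ i)ᶜ M → M.card ≤ w

/-- The graph obtained from `G` by adding one new vertex (`none`) adjacent to all
vertices of `G`. -/
def addUniversalVertex {V : Type*} (G : SimpleGraph V) : SimpleGraph (Option V) :=
  SimpleGraph.fromRel (fun x y =>
    x = none ∨ y = none ∨ ∃ a b, x = some a ∧ y = some b ∧ G.Adj a b)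

theorem addUniversalVertex_adj_some {V : Type*} (G : SimpleGraph V) (a b : V) :
    (addUniversalVertex G).Adj (some a) (some b) ↔ G.Adj a b := by
  constructor
  · simp only [addUniversalVertex, SimpleGraph.fromRel_adj]
    rintro ⟨-, (h | h | ⟨x, y, hx, hy, h⟩) | (h | h | ⟨x, y, hx, hy, h⟩)⟩
    · cases h
    · cases h
    · cases hx; cases hy; exact h
    · cases h
    · cases h
    · cases hx; cases hy; exact h.symm
  · intro h
    simp only [addUniversalVertex, SimpleGraph.fromRel_adj]
    exact ⟨fun e => h.ne (Option.some.inj e), Or.inl (Or.inr (Or.inr ⟨a, b, rfl, rfl, h⟩))⟩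

theorem addUniversalVertex_adj_none {V : Type*} (G : SimpleGraph V) {x : Option V}
    (hx : x ≠ none) : (addUniversalVertex G).Adj none x := by
  simp only [addUniversalVertex, SimpleGraph.fromRel_adj]
  exact ⟨hx.symm, Or.inl (Or.inl trivial)⟩

/-- Every prefix of an order on `Option V` extending `Λ` meets `V` in a prefix of `Λ`. -/
theorem exists_prefixSet_restrict {V : Type*} [Fintype V]
    (Λ : Fin (Fintype.card V) ≃ V) (Λ' : Fin (Fintype.card (Option V)) ≃ Option V)
    (hres : ∀ i j : Fin (Fintype.card V),
      i ≤ j ↔ Λ'.symm (some (Λ i)) ≤ Λ'.symm (some (Λ j))) (i : ℕ) :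
    ∃ k : ℕ, ∀ v : V, some v ∈ prefixSet Λ' i ↔ v ∈ prefixSet Λ k := by
  classical
  -- `k` is the first position of `Λ` whose vertex lies outside the prefix, or `|V|` if none does.
  have hex : ∃ m : ℕ, ∀ h : m < Fintype.card V, i ≤ (Λ'.symm (some (Λ ⟨m, h⟩)) : ℕ) :=
    ⟨Fintype.card V, fun h => absurd h (lt_irrefl _)⟩
  refine ⟨Nat.find hex, fun v => ?_⟩
  obtain ⟨j, rfl⟩ := Λ.surjective v
  simp only [prefixSet, Set.mem_ofPred_eq, Equiv.symm_apply_apply]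
  constructor
  · intro hj
    by_contra! hk
    have h1 := Nat.find_spec hex (hk.trans_lt j.2)
    have h2 : Λ'.symm (some (Λ ⟨Nat.find hex, hk.trans_lt j.2⟩)) ≤ Λ'.symm (some (Λ j)) :=
      (hres _ _).1 hk
    have h3 := Fin.le_def.1 h2
    omega
  · intro hj
    have h := Nat.find_min hex hj
    push Not at h
    exact h.2

/-- An induced matching containing an edge that is joined across the cut to every edge of the
matching has at most one edge. -/
theorem IsInducedMatchingAcross.card_le_one {V : Type*} {G : SimpleGraph V} {A B : Set V}
    {M : Finset (V × V)} (hM : IsInducedMatchingAcross G A B M) {p : V × V} (hp : p ∈ M)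
    (h : ∀ q ∈ M, G.Adj p.1 q.2 ∨ G.Adj q.1 p.2) : M.card ≤ 1 := by
  have key : ∀ q ∈ M, q = p := by
    intro q hq
    by_contra hne
    obtain ⟨-, -, h1, h2⟩ := hM.2 p hp q hq (Ne.symm hne)
    exact (h q hq).elim h1 h2
  exact Finset.card_le_one.2 fun a ha b hb => (key a ha).trans (key b hb).symm

/-- Adding a universal vertex anywhere in a linear order of mim-width `w ≥ 1` yields a
linear order of mim-width at most `w` of the new graph. -/
theorem universalVertex_mimwidth {V : Type*} [Fintype V]
    (G : SimpleGraph V) (w : ℕ) (hw : 1 ≤ w)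
    (Λ : Fin (Fintype.card V) ≃ V) (hΛ : MimwidthLE G Λ w)
    (Λ' : Fin (Fintype.card (Option V)) ≃ Option V)
    (hres : ∀ i j : Fin (Fintype.card V),
      i ≤ j ↔ Λ'.symm (some (Λ i)) ≤ Λ'.symm (some (Λ j))) :
    MimwidthLE (addUniversalVertex G) Λ' w := by
  intro i M hM
  -- The two endpoints of a crossing pair of edges lie on different sides of the cut.
  have hside : ∀ p ∈ M, ∀ q ∈ M, p.1 ≠ q.2 := fun p hp q hq e =>
    (hM.1 q hq).2.1 (e ▸ (hM.1 p hp).1)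
  by_cases hnone : ∃ p ∈ M, p.1 = none ∨ p.2 = none
  · obtain ⟨p, hp, h | h⟩ := hnone
    · refine (hM.card_le_one hp fun q hq => Or.inl ?_).trans hw
      rw [h]
      exact addUniversalVertex_adj_none G (h ▸ (hside p hp q hq).symm)
    · refine (hM.card_le_one hp fun q hq => Or.inr ?_).trans hw
      rw [h]
      exact (addUniversalVertex_adj_none G (h ▸ hside q hq p hp)).symm
  · push Not at hnone
    classical
    have hsub : (M : Set (Option V × Option V)) ⊆
        Prod.map (some : V → Option V) (some : V → Option V) '' Set.univ := by
      rintro ⟨x, y⟩ hp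
      obtain ⟨hx, hy⟩ := hnone _ hp
      obtain ⟨a, rfl⟩ := Option.ne_none_iff_exists'.1 hx
      obtain ⟨b, rfl⟩ := Option.ne_none_iff_exists'.1 hy
      exact ⟨(a, b), trivial, rfl⟩
    obtain ⟨N, -, rfl⟩ := Finset.subset_set_image_iff.1 hsub
    obtain ⟨k, hk⟩ := exists_prefixSet_restrict Λ Λ' hres i
    refine Finset.card_image_le.trans (hΛ k N ⟨fun p hp => ?_, fun p hp q hq hpq => ?_⟩)
    · obtain ⟨h1, h2, h3⟩ := hM.1 _ (Finset.mem_image_of_mem _ hp)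
      exact ⟨(hk _).1 h1, fun h => h2 ((hk _).2 h), (addUniversalVertex_adj_some G _ _).1 h3⟩
    · obtain ⟨h1, h2, h3, h4⟩ := hM.2 _ (Finset.mem_image_of_mem _ hp) _
        (Finset.mem_image_of_mem _ hq)
        (((Option.some_injective V).prodMap (Option.some_injective V)).ne hpq)
      exact ⟨fun e => h1 (congrArg some e), fun e => h2 (congrArg some e),
        fun e => h3 ((addUniversalVertex_adj_some G _ _).2 e),
        fun e => h4 ((addUniversalVertex_adj_some G _ _).2 e)⟩
end

section
/- Let G = (V,E) be a caterpillar, let k ≥ 3 be an integer, let L = k⁴ + 2k², and let H be the graph constructed from G and k as described. If H has bipartite bandwidth at most L, then G has bandwidth at most k. -/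
/-!
All vertices `x_v` of one copy of `H₀` get the same colour, since `G` is connected and its edges
become paths of even length, while the two copies of `x_{v₀}` are adjacent. So in one of the copies
every `x_v` lies in the side `X` ordered by `α`, and all the pendant vertices of that copy lie
in `Y`. Order `V` by the positions `α(x_v)`; this ordering has bandwidth at most `k`.

Indeed, if `vw` is an edge, then `α(x_v)` and `α(x_w)` differ by at most `2kL`. If `v` and `w` were
more than `k` apart in the ordering, at least `k + 2` vertices `u` would have `α(x_u)` between these
two values, and their `(k + 2) · 2k⁴` pendant neighbours would occupy distinct positions in an
interval with at most `(2k + 2)L + 1` integers (`pendant_count`). This is impossible for `k ≥ 3`,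
as `(2k + 2)(k⁴ + 2k²) + 1 < (k + 2) · 2k⁴` (`numeric_bound`).
-/

section

variable {V : Type*} [Fintype V] [LinearOrder V] (G : SimpleGraph V) [DecidableRel G.Adj]

/-- `G` is a caterpillar: a tree all of whose vertices of degree at least three lie on
a common path. -/
def IsCaterpillar : Prop :=
  G.Connected ∧ G.IsAcyclic ∧
  ∃ (a b : V) (p : G.Walk a b), p.IsPath ∧ ∀ v, 3 ≤ G.degree v → v ∈ p.support

/-- The edges of `G`, each represented once by its ordered pair of endpoints. -/
abbrev OrdEdge : Type _ := {p : V × V // G.Adj p.1 p.2 ∧ p.1 < p.2}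

/-- Vertices of `H₀`: the vertices `x_v` for `v ∈ V`, the `2k⁴` pendant vertices
attached to each `x_v`, and for each edge of `G` the `2k−1` internal vertices of the
path with `2k` edges replacing it. -/
abbrev H0Vert (k : ℕ) : Type _ := V ⊕ ((V × Fin (2 * k ^ 4)) ⊕ (OrdEdge G × Fin (2 * k - 1)))

/-- The relation generating the edges of `H₀`. -/
def H0Rel (k : ℕ) : H0Vert G k → H0Vert G k → Prop
  | Sum.inl v, Sum.inr (Sum.inl (u, _)) => v = u
  | Sum.inl v, Sum.inr (Sum.inr (e, i)) =>
      (v = e.val.1 ∧ (i : ℕ) = 0) ∨ (v = e.val.2 ∧ (i : ℕ) = 2 * k - 2)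
  | Sum.inr (Sum.inr (e, i)), Sum.inr (Sum.inr (e', j)) => e = e' ∧ (j : ℕ) = (i : ℕ) + 1
  | _, _ => False

/-- The graph `H₀` obtained from `G`: each vertex `v` becomes `x_v` with `2k⁴` pendant
neighbors, and each edge is replaced by a path with `2k` edges. -/
def H0Graph (k : ℕ) : SimpleGraph (H0Vert G k) := SimpleGraph.fromRel (H0Rel G k)

/-- The graph `H`: two disjoint copies of `H₀` together with an edge between the two
copies of `x_{v₀}` for a fixed vertex `v₀ ∈ V`. -/
def HGraph (k : ℕ) (v₀ : V) : SimpleGraph (Bool × H0Vert G k) :=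
  SimpleGraph.fromRel (fun x y =>
    (x.1 = y.1 ∧ H0Rel G k x.2 y.2) ∨
    (x.1 ≠ y.1 ∧ x.2 = Sum.inl v₀ ∧ y.2 = Sum.inl v₀))

end

section

variable {W : Type*} [Fintype W]

/-- The graph `J` has bandwidth at most `k`. -/
def BandwidthLE (J : SimpleGraph W) (k : ℕ) : Prop :=
  ∃ f : W ≃ Fin (Fintype.card W),
    ∀ v u, J.Adj v u → ((f v : ℤ) - (f u : ℤ)).natAbs ≤ k

/-- The graph `J`, bipartite with bipartition `(X, Y)` given by a proper 2-coloring
`s`, has bipartite bandwidth at most `L`: there are orderings `α` of `X` and `β` of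
`Y` with `|α(u) − β(v)| ≤ L` for every edge `uv`. -/
def BipartiteBandwidthLE (J : SimpleGraph W) (L : ℕ) : Prop :=
  ∃ s : W → Bool,
    (∀ u v, J.Adj u v → s u ≠ s v) ∧
    ∃ (α : {x : W // s x = true} ≃ Fin (Fintype.card {x : W // s x = true}))
      (β : {x : W // s x = false} ≃ Fin (Fintype.card {x : W // s x = false})),
      ∀ (u : {x : W // s x = true}) (v : {x : W // s x = false}),
        J.Adj u.val v.val → ((α u : ℤ) - (β v : ℤ)).natAbs ≤ L

end

section

variable {V : Type*} [LinearOrder V] {G : SimpleGraph V} {k : ℕ} {v₀ : V}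

lemma HGraph_adj_pendant (c : Bool) (v : V) (i : Fin (2 * k ^ 4)) :
    (HGraph G k v₀).Adj (c, Sum.inl v) (c, Sum.inr (Sum.inl (v, i))) := by
  simp [HGraph, H0Rel]

lemma HGraph_adj_first (c : Bool) (e : OrdEdge G) (i : Fin (2 * k - 1)) (hi : (i : ℕ) = 0) :
    (HGraph G k v₀).Adj (c, Sum.inl e.val.1) (c, Sum.inr (Sum.inr (e, i))) := by
  simp [HGraph, H0Rel, hi]

lemma HGraph_adj_last (c : Bool) (e : OrdEdge G) (i : Fin (2 * k - 1))
    (hi : (i : ℕ) = 2 * k - 2) :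
    (HGraph G k v₀).Adj (c, Sum.inl e.val.2) (c, Sum.inr (Sum.inr (e, i))) := by
  simp [HGraph, H0Rel, hi]

lemma HGraph_adj_step (c : Bool) (e : OrdEdge G) (i j : Fin (2 * k - 1))
    (hij : (j : ℕ) = i + 1) :
    (HGraph G k v₀).Adj (c, Sum.inr (Sum.inr (e, i))) (c, Sum.inr (Sum.inr (e, j))) := by
  have hne : i ≠ j := by rintro rfl; omega
  simp [HGraph, H0Rel, hij, hne]

lemma HGraph_adj_link : (HGraph G k v₀).Adj (true, Sum.inl v₀) (false, Sum.inl v₀) := by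
  simp [HGraph]

/-- Induction along the path replacing the edge `e`: colours alternate, and each step moves the
position by at most `L`. -/
lemma path_position (c : Bool) (s : Bool × H0Vert G k → Bool) (pos : Bool × H0Vert G k → ℤ)
    (L : ℤ) (hs : ∀ u v, (HGraph G k v₀).Adj u v → s u ≠ s v)
    (hpos : ∀ u v, (HGraph G k v₀).Adj u v → |pos u - pos v| ≤ L)
    (e : OrdEdge G) (i : ℕ) (hi : i < 2 * k - 1) :
    (s (c, Sum.inr (Sum.inr (e, ⟨i, hi⟩))) = s (c, Sum.inl e.val.1) ↔ i % 2 = 1) ∧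
    |pos (c, Sum.inl e.val.1) - pos (c, Sum.inr (Sum.inr (e, ⟨i, hi⟩)))| ≤ (i + 1) * L := by
  induction i with
  | zero =>
    have h := HGraph_adj_first (v₀ := v₀) c e ⟨0, hi⟩ rfl
    refine ⟨?_, ?_⟩
    · simpa using (hs _ _ h).symm
    · simpa using hpos _ _ h
  | succ i ih =>
    obtain ⟨h1, h2⟩ := ih (by omega)
    have h := HGraph_adj_step (v₀ := v₀) c e ⟨i, by omega⟩ ⟨i + 1, hi⟩ rfl
    have h3 := hs _ _ h
    have h4 := hpos _ _ h
    refine ⟨?_, ?_⟩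
    · have : (i + 1) % 2 = 1 ↔ ¬ (i % 2 = 1) := by omega
      rw [this, ← h1]
      revert h3
      generalize s (c, Sum.inr (Sum.inr (e, ⟨i, _⟩))) = x
      generalize s (c, Sum.inr (Sum.inr (e, ⟨i + 1, _⟩))) = y
      generalize s (c, Sum.inl e.val.1) = z
      revert x y z
      decide
    · have := (abs_sub_le (pos (c, Sum.inl e.val.1)) _ _).trans (add_le_add h2 h4)
      push_cast
      linarith

/-- The ends of an edge of `G` have equal colours and positions at distance at most `2kL`. -/
lemma edge_position (hk : 1 ≤ k) (c : Bool) (s : Bool × H0Vert G k → Bool)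
    (pos : Bool × H0Vert G k → ℤ)
    (L : ℤ) (hs : ∀ u v, (HGraph G k v₀).Adj u v → s u ≠ s v)
    (hpos : ∀ u v, (HGraph G k v₀).Adj u v → |pos u - pos v| ≤ L)
    {v w : V} (hvw : G.Adj v w) :
    s (c, Sum.inl v) = s (c, Sum.inl w) ∧
    |pos (c, Sum.inl v) - pos (c, Sum.inl w)| ≤ 2 * k * L := by
  wlog hlt : v < w generalizing v w
  · have := this hvw.symm (lt_of_le_of_ne (not_lt.mp hlt) hvw.ne')
    rw [abs_sub_comm]
    exact ⟨this.1.symm, this.2⟩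
  obtain ⟨h1, h2⟩ := path_position c s pos L hs hpos ⟨(v, w), hvw, hlt⟩ (2 * k - 2) (by omega)
  have h := HGraph_adj_last (v₀ := v₀) c ⟨(v, w), hvw, hlt⟩ ⟨2 * k - 2, by omega⟩ rfl
  have h3 := hs _ _ h
  have h4 := hpos _ _ h
  dsimp only at h1 h2 h3 h4
  have h5 : ¬ ((2 * k - 2) % 2 = 1) := by omega
  rw [← h1] at h5
  refine ⟨?_, ?_⟩
  · rw [Bool.eq_not_of_ne h3, Bool.eq_not_of_ne h5, Bool.not_not]
  · rw [abs_sub_comm] at h4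
    have := (abs_sub_le (pos (c, Sum.inl v)) _ _).trans (add_le_add h2 h4)
    have hc : ((2 * k - 2 : ℕ) : ℤ) = 2 * k - 2 := by omega
    rw [hc] at this
    linarith

/-- The pendant neighbours of the `x_u`, `u ∈ S`, occupy distinct positions within distance `L` of
the interval `[a, b]` containing the positions of these `x_u`. -/
lemma pendant_count (c : Bool) (pos : Bool × H0Vert G k → ℤ) (L a b : ℤ)
    (hpos : ∀ u v, (HGraph G k v₀).Adj u v → |pos u - pos v| ≤ L)
    (hinj : ∀ x y : V × Fin (2 * k ^ 4),
      pos (c, Sum.inr (Sum.inl x)) = pos (c, Sum.inr (Sum.inl y)) → x = y)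
    (hab : a ≤ b) (hL : 0 ≤ L) (S : Finset V)
    (hS : ∀ u ∈ S, a ≤ pos (c, Sum.inl u) ∧ pos (c, Sum.inl u) ≤ b) :
    (S.card : ℤ) * (2 * k ^ 4) ≤ b - a + 2 * L + 1 := by
  have h := Finset.card_le_card_of_injOn
    (s := S ×ˢ (Finset.univ : Finset (Fin (2 * k ^ 4)))) (t := Finset.Icc (a - L) (b + L))
    (fun x => pos (c, Sum.inr (Sum.inl x))) (by
      rintro ⟨u, i⟩ hx
      have hu : u ∈ S := by simpa using hx
      have h1 := abs_le.mp (hpos _ _ (HGraph_adj_pendant (v₀ := v₀) c u i))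
      have h2 := hS u hu
      simp only [Finset.coe_Icc, Set.mem_Icc]
      constructor <;> linarith) (fun x _ y _ hxy => hinj x y hxy)
  rw [Finset.card_product, Finset.card_univ, Fintype.card_fin, Int.card_Icc] at h
  zify at h
  rw [Int.toNat_of_nonneg (by linarith)] at h
  linarith

end

lemma numeric_bound (k : ℤ) (hk : 3 ≤ k) :
    2 * k * (k ^ 4 + 2 * k ^ 2) + 2 * (k ^ 4 + 2 * k ^ 2) + 1 < (k + 2) * (2 * k ^ 4) := by
  obtain ⟨m, rfl⟩ : ∃ m, k = m + 3 := ⟨k - 3, by ring⟩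
  have hm : 0 ≤ m := by linarith
  rw [← sub_pos]
  ring_nf
  positivity

/-- Sorting a finite type by an injective integer-valued function `p`: the order `f` is such that
the elements from `v` to `w` in the order are counted by `f w - f v + 1`. -/
lemma exists_order_of_injective {V : Type*} [Fintype V] (p : V → ℤ) (hp : Function.Injective p) :
    ∃ f : V ≃ Fin (Fintype.card V), ∀ v w, p v ≤ p w →
      (f v : ℤ) ≤ f w ∧
      ((Finset.univ.filter fun u => p v ≤ p u ∧ p u ≤ p w).card : ℤ) = f w - f v + 1 := by
  classical
  let A : V → Finset V := fun v => Finset.univ.filter fun u => p u < p v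
  have hcount : ∀ v w, p v ≤ p w →
      (Finset.univ.filter fun u => p v ≤ p u ∧ p u ≤ p w).card + (A v).card
        = (A w).card + 1 := by
    intro v w hvw
    rw [← Finset.card_union_of_disjoint, ← Finset.card_insert_of_notMem (a := w) (s := A w)]
    · congr 1
      ext u
      have : u = w ↔ p u = p w := hp.eq_iff.symm
      simp only [A, Finset.mem_union, Finset.mem_filter, Finset.mem_univ, true_and,
        Finset.mem_insert, this]
      omega
    · simp [A]
    · rw [Finset.disjoint_left]
      intro u
      simp only [A, Finset.mem_filter, Finset.mem_univ, true_and]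
      omega
  have hle : ∀ v w, p v ≤ p w → (A v).card ≤ (A w).card := fun v w hvw =>
    Finset.card_le_card fun u hu => by
      simp only [A, Finset.mem_filter, Finset.mem_univ, true_and] at hu ⊢
      omega
  have hlt : ∀ v w, p v < p w → (A v).card < (A w).card := fun v w hvw =>
    Finset.card_lt_card (Finset.ssubset_iff_of_subset (fun u hu => by
      simp only [A, Finset.mem_filter, Finset.mem_univ, true_and] at hu ⊢
      omega) |>.mpr ⟨v, by simpa [A] using hvw, by simp [A]⟩)
  let r : V → Fin (Fintype.card V) := fun v => ⟨(A v).card, by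
    rw [← Finset.card_univ]
    exact Finset.card_lt_card (Finset.ssubset_univ_iff.mpr fun h => by
      have : v ∈ A v := h ▸ Finset.mem_univ v
      simp [A] at this)⟩
  have hr : Function.Injective r := by
    intro v w h
    have h' : (A v).card = (A w).card := congrArg Fin.val h
    rcases lt_trichotomy (p v) (p w) with hvw | hvw | hvw
    · have := hlt _ _ hvw; omega
    · exact hp hvw
    · have := hlt _ _ hvw; omega
  refine ⟨Equiv.ofBijective r ((Fintype.bijective_iff_injective_and_card r).mpr ⟨hr, by simp⟩),
    fun v w hvw => ?_⟩
  have h1 := hcount v w hvw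
  have h2 := hle v w hvw
  simp only [Equiv.ofBijective_apply, r]
  omega

/-- If `H` (built from the caterpillar `G` and `k ≥ 3` with linking vertex `v₀`) has
bipartite bandwidth at most `L = k⁴ + 2k²`, then `G` has bandwidth at most `k`. -/
theorem bandwidth_of_bipartite_bandwidth_H {V : Type*} [Fintype V] [LinearOrder V]
    (G : SimpleGraph V) [DecidableRel G.Adj] (k : ℕ) (v₀ : V)
    (hcat : IsCaterpillar G) (hk : 3 ≤ k)
    (hH : BipartiteBandwidthLE (HGraph G k v₀) (k ^ 4 + 2 * k ^ 2)) :
    BandwidthLE G k := by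
  obtain ⟨hconn, -, -⟩ := hcat
  obtain ⟨s, hs, α, β, hαβ⟩ := hH
  -- `pos` combines `α` and `β` into one function; it is injective on each side only.
  let pos : Bool × H0Vert G k → ℤ := fun w =>
    if h : s w = true then (α ⟨w, h⟩ : ℤ) else (β ⟨w, by simpa using h⟩ : ℤ)
  have hpos : ∀ u v, (HGraph G k v₀).Adj u v →
      |pos u - pos v| ≤ ((k ^ 4 + 2 * k ^ 2 : ℕ) : ℤ) := by
    intro u v huv
    have hne := hs u v huv
    rw [Int.abs_eq_natAbs, Int.ofNat_le]
    by_cases hu : s u = true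
    · have hv : s v = false := by simpa [hu] using hne
      simpa [pos, hu, hv] using hαβ ⟨u, hu⟩ ⟨v, hv⟩ huv
    · have hv : s v = true := by simpa [hu] using hne
      have hu : s u = false := by simpa using hu
      rw [← Int.natAbs_neg, neg_sub]
      simpa [pos, hu, hv] using hαβ ⟨v, hv⟩ ⟨u, hu⟩ huv.symm
  have hinj : ∀ u v, s u = s v → pos u = pos v → u = v := by
    intro u v huv h
    by_cases hu : s u = true
    · have hv : s v = true := huv ▸ hu
      simpa [pos, hu, hv, Fin.val_inj] using h
    · have hv : ¬ s v = true := huv ▸ hu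
      simpa [pos, hu, hv, Fin.val_inj] using h
  have hedge := fun {v w : V} (h : G.Adj v w) (c : Bool) =>
    edge_position (v₀ := v₀) (by omega) c s pos _ hs hpos h
  -- The adjacent copies of `x_{v₀}` have different colours: `c` is the copy coloured `true`.
  obtain ⟨c, hc⟩ : ∃ c, s (c, Sum.inl v₀) = true := by
    have h := hs _ _ (HGraph_adj_link (G := G) (k := k) (v₀ := v₀))
    by_cases h' : s (true, Sum.inl v₀) = true
    · exact ⟨true, h'⟩
    · exact ⟨false, by simpa [h'] using h⟩
  have hcol : ∀ v, s (c, Sum.inl v) = true := by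
    intro v
    have hwalk : ∀ {a b : V}, G.Walk a b → s (c, Sum.inl a) = s (c, Sum.inl b) := by
      intro a b p
      induction p with
      | nil => rfl
      | cons h _ ih => exact (hedge h c).1.trans ih
    obtain ⟨p⟩ := hconn.preconnected v v₀
    exact (hwalk p).trans hc
  have hpend : ∀ x : V × Fin (2 * k ^ 4), s (c, Sum.inr (Sum.inl x)) = false := by
    rintro ⟨v, i⟩
    simpa [hcol v] using hs _ _ (HGraph_adj_pendant (v₀ := v₀) (G := G) c v i)
  obtain ⟨f, hf⟩ := exists_order_of_injective (fun v => pos (c, Sum.inl v)) fun v w h => by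
    simpa using hinj _ _ ((hcol v).trans (hcol w).symm) h
  refine ⟨f, fun v w hvw => ?_⟩
  wlog hle : pos (c, Sum.inl v) ≤ pos (c, Sum.inl w) generalizing v w
  · rw [← Int.natAbs_neg, neg_sub]
    exact this w v hvw.symm (le_of_not_ge hle)
  obtain ⟨h1, h2⟩ := hf v w hle
  by_contra hcon
  have h3 := pendant_count (v₀ := v₀) c pos _ _ _ hpos
    (fun x y h => by simpa using hinj _ _ ((hpend x).trans (hpend y).symm) h) hle (by positivity)
    (Finset.univ.filter fun u =>
      pos (c, Sum.inl v) ≤ pos (c, Sum.inl u) ∧ pos (c, Sum.inl u) ≤ pos (c, Sum.inl w))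
    (fun u hu => by simpa using hu)
  have h4 := (abs_le.mp (hedge hvw c).2).1
  have h5 := numeric_bound k (by exact_mod_cast hk)
  rw [h2] at h3
  have h6 : (k : ℤ) + 2 ≤ f w - f v + 1 := by omega
  have h7 : ((k : ℤ) + 2) * (2 * k ^ 4) ≤ (f w - f v + 1) * (2 * k ^ 4) :=
    mul_le_mul_of_nonneg_right h6 (by positivity)
  push_cast at h3 h4
  linarith
end
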